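/- There exists an absolute constant C > 0 with the following property. Let d1, d2 ≥ 1, d = d1 + d2, α > 0, r ≥ 1, and let F : ℝ → (0,1) be differentiable with F, F' nonzero on [−α, α] and L_α, β_α, U_α finite. Let Π = (π_{kl}) be a probability distribution on [d1]×[d2] satisfying π_{kl} ≥ 1/(μ d1 d2) for all (k,l), for some μ ≥ 1. Let M* ∈ K_{Π,*}(r, α) = { M ∈ ℝ^{d1×d2} : ‖M‖_{w,*} ≤ α√r, ‖M‖_∞ ≤ α }, let S = ((i₁,j₁), …, (iₙ,jₙ)) be drawn i.i.d. from Π with n ≥ μ min(d1,d2) log(d); given S, let Y_{i_t,j_t} ∈ {−1, +1} be independent with P(Y_{i_t,j_t}=1) = F(M*_{i_t,j_t}), and let M̂_{w,tr} be any minimizer over K_{Π,*}(r, α) of the negative log-likelihood ℓ_S(M; Y). Then for any δ > 0, with probability at least 1 − δ, ‖M̂_{w,tr} − M*‖_Π² ≤ C β_α { L_α α √( μ r d log(d) / n ) + U_α √( log(4/δ)/n ) }. -/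

import Mathlib

open scoped BigOperators
open Matrix

/-- The elementwise `ℓ∞`-norm of a matrix: `max_{k,l} |M_{k,l}|`. -/
noncomputable def linfNorm {d1 d2 : ℕ} (M : Matrix (Fin d1) (Fin d2) ℝ) : ℝ :=
  ⨆ k, ⨆ l, |M k l|

/-- The trace-norm (nuclear norm) of a real matrix: the sum of its singular values,
i.e. the square roots of the eigenvalues of `M * Mᵀ`. -/
noncomputable def traceNorm {d1 d2 : ℕ} (M : Matrix (Fin d1) (Fin d2) ℝ) : ℝ :=
  ∑ i, Real.sqrt ((Matrix.isHermitian_mul_conjTranspose_self M).eigenvalues i)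

/-- The `Π`-weighted trace-norm
`‖M‖_{w,*} = ‖ diag(√π_{1·},…,√π_{d1·}) · M · diag(√π_{·1},…,√π_{·d2}) ‖_*`. -/
noncomputable def weightedTraceNorm {d1 d2 : ℕ} (π : Fin d1 → Fin d2 → ℝ)
    (M : Matrix (Fin d1) (Fin d2) ℝ) : ℝ :=
  traceNorm (Matrix.diagonal (fun k => Real.sqrt (∑ l, π k l)) * M *
    Matrix.diagonal (fun l => Real.sqrt (∑ k, π k l)))

/-- The negative log-likelihood `ℓ_S(M; Y)` of the matrix `M` for observed signs
`y : Fin n → Bool` (`y t = true` encodes `Y_{i_t,j_t} = +1`) at sampled index pairs `S`. -/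
noncomputable def negLogLik {d1 d2 n : ℕ} (F : ℝ → ℝ)
    (S : Fin n → Fin d1 × Fin d2) (y : Fin n → Bool)
    (M : Matrix (Fin d1) (Fin d2) ℝ) : ℝ :=
  ∑ t, if y t then Real.log (1 / F (M (S t).1 (S t).2))
    else Real.log (1 / (1 - F (M (S t).1 (S t).2)))

/-- The probability weight of the outcome `(S, y)` under i.i.d. sampling of the index pairs
from `Π` and, given `S`, independent signs with `P(Y_{i_t,j_t} = 1) = F(M*_{i_t,j_t})`. -/
noncomputable def sampleWeight {d1 d2 n : ℕ} (F : ℝ → ℝ) (π : Fin d1 → Fin d2 → ℝ)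
    (Mstar : Matrix (Fin d1) (Fin d2) ℝ)
    (S : Fin n → Fin d1 × Fin d2) (y : Fin n → Bool) : ℝ :=
  ∏ t, π (S t).1 (S t).2 *
    (if y t then F (Mstar (S t).1 (S t).2) else 1 - F (Mstar (S t).1 (S t).2))

/-! ### Finite probability tools -/

noncomputable def sgn' (b : Bool) : ℝ := if b then 1 else -1

noncomputable def mx {T : Type} [Fintype T] [Nonempty T] (f : T → ℝ) : ℝ :=
  Finset.univ.sup' Finset.univ_nonempty f

section mx
variable {T : Type} [Fintype T] [Nonempty T]

lemma le_mx (f : T → ℝ) (τ : T) : f τ ≤ mx f := Finset.le_sup' f (Finset.mem_univ τ)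

lemma mx_le {f : T → ℝ} {c : ℝ} (h : ∀ τ, f τ ≤ c) : mx f ≤ c :=
  Finset.sup'_le _ _ (fun τ _ => h τ)

lemma exists_mx (f : T → ℝ) : ∃ τ, mx f = f τ := by
  obtain ⟨τ, _, h⟩ := Finset.exists_mem_eq_sup' (Finset.univ_nonempty (α := T)) f
  exact ⟨τ, h⟩

lemma mx_mono {f g : T → ℝ} (h : ∀ τ, f τ ≤ g τ) : mx f ≤ mx g :=
  mx_le (fun τ => (h τ).trans (le_mx g τ))
end mx

lemma sum_cons {Ω : Type} [Fintype Ω] (n : ℕ) (f : (Fin (n + 1) → Ω) → ℝ) :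
    ∑ x, f x = ∑ a, ∑ x, f (Fin.cons a x) := by
  rw [← Fintype.sum_prod_type' (f := fun a x => f (Fin.cons a x))]
  exact (Fintype.sum_equiv (Fin.consEquiv (fun _ : Fin (n + 1) => Ω)) _ _ (fun _ => rfl)).symm

lemma sum_prod_one {Ω : Type} [Fintype Ω] (n : ℕ) (w : Ω → ℝ) (hw1 : ∑ a, w a = 1) :
    ∑ x : Fin n → Ω, ∏ t, w (x t) = 1 := by
  induction n with
  | zero => simp
  | succ n ih =>
    rw [sum_cons]
    simp only [Fin.prod_univ_succ, Fin.cons_zero, Fin.cons_succ, ← Finset.mul_sum, ih, mul_one, hw1]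

lemma sum_prod_eq {Ω : Type} [Fintype Ω] (n : ℕ) (w : Ω → ℝ) :
    ∑ x : Fin n → Ω, ∏ t, w (x t) = (∑ a, w a) ^ n := by
  induction n with
  | zero => simp
  | succ n ih =>
    rw [sum_cons]
    simp only [Fin.prod_univ_succ, Fin.cons_zero, Fin.cons_succ, ← Finset.mul_sum, ih]
    rw [← Finset.sum_mul, pow_succ']

/-- crude Hoeffding lemma -/
lemma hoeffding_fin {Ω : Type} [Fintype Ω] (w g : Ω → ℝ) (hw : ∀ a, 0 ≤ w a)
    (hw1 : ∑ a, w a = 1) (c : ℝ) (hc : ∀ a b, |g a - g b| ≤ c) :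
    ∑ a, w a * Real.exp (g a - ∑ b, w b * g b) ≤ Real.exp (c ^ 2 / 2) := by
  have h1 : ∀ a, Real.exp (g a - ∑ b, w b * g b) ≤ ∑ b, w b * Real.exp (g a - g b) := by
    intro a
    have := convexOn_exp.map_sum_le (t := Finset.univ) (w := w) (p := fun b => g a - g b)
      (fun i _ => hw i) hw1 (fun i _ => Set.mem_univ _)
    simp only [smul_eq_mul] at this
    refine le_trans (le_of_eq ?_) this
    congr 1
    simp only [mul_sub, Finset.sum_sub_distrib, ← Finset.sum_mul, hw1, one_mul]
  have h2 : ∑ a, w a * Real.exp (g a - ∑ b, w b * g b)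
      ≤ ∑ a, ∑ b, w a * w b * Real.exp (g a - g b) := by
    refine Finset.sum_le_sum fun a _ => ?_
    refine (mul_le_mul_of_nonneg_left (h1 a) (hw a)).trans (le_of_eq ?_)
    rw [Finset.mul_sum]
    exact Finset.sum_congr rfl fun b _ => by ring
  have h3 : ∑ a, ∑ b, w a * w b * Real.exp (g a - g b)
      = ∑ a, ∑ b, w a * w b * Real.cosh (g a - g b) := by
    have h4 : ∑ a, ∑ b, w a * w b * Real.exp (g a - g b)
        = ∑ a, ∑ b, w a * w b * Real.exp (-(g a - g b)) := by
      rw [Finset.sum_comm]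
      refine Finset.sum_congr rfl fun b _ => Finset.sum_congr rfl fun a _ => ?_
      rw [neg_sub]; ring
    have h5 : ∑ a, ∑ b, w a * w b * Real.cosh (g a - g b)
        = (∑ a, ∑ b, w a * w b * Real.exp (g a - g b)
          + ∑ a, ∑ b, w a * w b * Real.exp (-(g a - g b))) / 2 := by
      rw [← Finset.sum_add_distrib, Finset.sum_div]
      refine Finset.sum_congr rfl fun a _ => ?_
      rw [← Finset.sum_add_distrib, Finset.sum_div]
      refine Finset.sum_congr rfl fun b _ => ?_
      rw [Real.cosh_eq]; ring
    rw [h5, ← h4]; ring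
  have h6 : ∑ a, ∑ b, w a * w b * Real.cosh (g a - g b)
      ≤ ∑ a, ∑ b, w a * w b * Real.exp (c ^ 2 / 2) := by
    refine Finset.sum_le_sum fun a _ => Finset.sum_le_sum fun b _ => ?_
    refine mul_le_mul_of_nonneg_left ?_ (mul_nonneg (hw a) (hw b))
    refine (Real.cosh_le_exp_half_sq _).trans ?_
    apply Real.exp_le_exp.mpr
    have := hc a b
    have h7 := sq_le_sq' (neg_le_of_abs_le this) (le_of_abs_le this)
    linarith
  have h8 : ∑ a, ∑ b, w a * w b * Real.exp (c ^ 2 / 2) = Real.exp (c ^ 2 / 2) := by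
    simp only [← Finset.sum_mul, ← Finset.mul_sum, hw1, mul_one, one_mul]
  linarith

/-- McDiarmid mgf bound. -/
lemma mcdiarmid_mgf {Ω : Type} [Fintype Ω] (w : Ω → ℝ) (hw : ∀ a, 0 ≤ w a)
    (hw1 : ∑ a, w a = 1) (c : ℝ) (n : ℕ) (Z : (Fin n → Ω) → ℝ)
    (hZ : ∀ x t a, |Z x - Z (Function.update x t a)| ≤ c) :
    ∑ x, (∏ t, w (x t)) * Real.exp (Z x - ∑ y, (∏ t, w (y t)) * Z y)
      ≤ Real.exp (n * (c ^ 2 / 2)) := by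
  induction n with
  | zero => simp
  | succ n ih =>
    set g : Ω → ℝ := fun a => ∑ y : Fin n → Ω, (∏ t, w (y t)) * Z (Fin.cons a y) with hg
    have hEZ : ∑ y : Fin (n + 1) → Ω, (∏ t, w (y t)) * Z y = ∑ a, w a * g a := by
      rw [sum_cons]
      simp only [Fin.prod_univ_succ, Fin.cons_zero, Fin.cons_succ, hg, Finset.mul_sum, mul_assoc]
    have hgd : ∀ a b, |g a - g b| ≤ c := by
      intro a b
      rw [hg]
      simp only
      rw [← Finset.sum_sub_distrib]
      calc |∑ y : Fin n → Ω, ((∏ t, w (y t)) * Z (Fin.cons a y) - (∏ t, w (y t)) * Z (Fin.cons b y))|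
          ≤ ∑ y : Fin n → Ω, |(∏ t, w (y t)) * Z (Fin.cons a y) - (∏ t, w (y t)) * Z (Fin.cons b y)| :=
            Finset.abs_sum_le_sum_abs _ _
        _ ≤ ∑ y : Fin n → Ω, (∏ t, w (y t)) * c := by
            refine Finset.sum_le_sum fun y _ => ?_
            have hp : 0 ≤ ∏ t, w (y t) := Finset.prod_nonneg fun t _ => hw _
            rw [← mul_sub, abs_mul, abs_of_nonneg hp]
            refine mul_le_mul_of_nonneg_left ?_ hp
            have := hZ (Fin.cons a y) 0 b
            rwa [Fin.update_cons_zero] at this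
        _ = c := by rw [← Finset.sum_mul, sum_prod_one n w hw1, one_mul]
    rw [hEZ, sum_cons]
    have hstep : ∀ a, ∑ x : Fin n → Ω, (∏ t, w ((Fin.cons a x : Fin (n+1) → Ω) t)) *
        Real.exp (Z (Fin.cons a x) - ∑ a, w a * g a)
        ≤ Real.exp (n * (c ^ 2 / 2)) * (w a * Real.exp (g a - ∑ a, w a * g a)) := by
      intro a
      have := ih (fun x => Z (Fin.cons a x)) (by
        intro x t b
        have := hZ (Fin.cons a x) t.succ b
        rwa [← Fin.cons_update] at this)
      have h2 := mul_le_mul_of_nonneg_right this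
        (mul_nonneg (hw a) (Real.exp_nonneg (g a - ∑ a, w a * g a)))
      refine le_trans (le_of_eq ?_) h2
      rw [Finset.sum_mul]
      refine Finset.sum_congr rfl fun x _ => ?_
      simp only [Fin.prod_univ_succ, Fin.cons_zero, Fin.cons_succ]
      have : Real.exp (Z (Fin.cons a x) - ∑ a, w a * g a)
        = Real.exp (Z (Fin.cons a x) - g a) * Real.exp (g a - ∑ a, w a * g a) := by
        rw [← Real.exp_add]; congr 1; ring
      rw [this]; ring
    refine (Finset.sum_le_sum fun a _ => hstep a).trans ?_
    rw [← Finset.mul_sum]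
    refine (mul_le_mul_of_nonneg_left (hoeffding_fin w g hw hw1 c hgd) (Real.exp_nonneg _)).trans ?_
    rw [← Real.exp_add]
    apply le_of_eq; congr 1; push_cast; ring

/-- McDiarmid tail bound, in good-event form. -/
lemma mcdiarmid_tail {Ω : Type} [Fintype Ω] (w : Ω → ℝ) (hw : ∀ a, 0 ≤ w a)
    (hw1 : ∑ a, w a = 1) (c : ℝ) (hc : 0 < c) (n : ℕ) (hn : 0 < n) (Z : (Fin n → Ω) → ℝ)
    (hZ : ∀ x t a, |Z x - Z (Function.update x t a)| ≤ c) (δ : ℝ) (hδ : 0 < δ) (hδ1 : δ ≤ 1)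
    (G : Set (Fin n → Ω))
    (hG : ∀ x, Z x ≤ ∑ y, (∏ t, w (y t)) * Z y + c * Real.sqrt (2 * n * Real.log (1 / δ)) → x ∈ G) :
    1 - δ ≤ ∑ x, G.indicator (fun x => ∏ t, w (x t)) x := by
  classical
  set E := ∑ y, (∏ t, w (y t)) * Z y with hE
  set l := Real.log (1 / δ) with hl
  have hl0 : 0 ≤ l := Real.log_nonneg (by rw [le_div_iff₀ hδ]; linarith)
  have hn' : (0:ℝ) < n := by exact_mod_cast hn
  set s := Real.sqrt (2 * n * l) with hs
  have hs2 : s ^ 2 = 2 * n * l := Real.sq_sqrt (by positivity)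
  have hs0 : 0 ≤ s := Real.sqrt_nonneg _
  -- lam * c = s / n
  set lam := s / (n * c) with hlam
  have hlam0 : 0 ≤ lam := by positivity
  have hmgf := mcdiarmid_mgf w hw hw1 (lam * c) n (fun x => lam * Z x) (by
    intro x t a
    rw [← mul_sub, abs_mul, abs_of_nonneg hlam0]
    exact mul_le_mul_of_nonneg_left (hZ x t a) hlam0)
  have hE' : ∑ y, (∏ t, w (y t)) * (lam * Z y) = lam * E := by
    rw [hE, Finset.mul_sum]; exact Finset.sum_congr rfl fun y _ => by ring
  simp only [hE'] at hmgf
  have hlc : lam * c = s / n := by rw [hlam]; field_simp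
  have hexp : (n:ℝ) * ((lam * c) ^ 2 / 2) = l := by
    rw [hlc, div_pow, hs2]; field_simp
  rw [hexp] at hmgf
  have hpt : ∀ x : Fin n → Ω, (∏ t, w (x t)) - G.indicator (fun x => ∏ t, w (x t)) x
      ≤ (∏ t, w (x t)) * Real.exp (lam * Z x - lam * E) * Real.exp (-(2 * l)) := by
    intro x
    have hp : 0 ≤ ∏ t, w (x t) := Finset.prod_nonneg fun t _ => hw _
    by_cases hx : x ∈ G
    · rw [Set.indicator_of_mem hx, sub_self]; positivity
    · rw [Set.indicator_of_notMem hx, sub_zero, mul_assoc, ← Real.exp_add]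
      have h1 : E + c * s < Z x := by
        by_contra hcon
        exact hx (hG x (not_lt.mp hcon))
      have h2 : lam * (c * s) ≤ lam * (Z x - E) :=
        mul_le_mul_of_nonneg_left (by linarith) hlam0
      have h3 : lam * (c * s) = 2 * l := by
        rw [← mul_assoc, hlc]
        rw [div_mul_eq_mul_div, ← sq, hs2]; field_simp
      have h4 : 1 ≤ Real.exp (lam * Z x - lam * E + -(2 * l)) := by
        apply Real.one_le_exp; nlinarith
      exact le_mul_of_one_le_right hp h4
  have hsum := Finset.sum_le_sum (fun x (_ : x ∈ Finset.univ) => hpt x)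
  rw [Finset.sum_sub_distrib, sum_prod_one n w hw1, ← Finset.sum_mul] at hsum
  have h5 := mul_le_mul_of_nonneg_right hmgf (Real.exp_nonneg (-(2 * l)))
  rw [← Real.exp_add] at h5
  have h6 : Real.exp (l + -(2 * l)) = δ := by
    rw [show l + -(2 * l) = -l by ring, hl, one_div, Real.log_inv, neg_neg, Real.exp_log hδ]
  rw [h6] at h5
  linarith

/-- Symmetrization. -/
lemma symmetrization {Ω T : Type} [Fintype Ω] [Fintype T] [Nonempty T] (w : Ω → ℝ)
    (hw : ∀ a, 0 ≤ w a) (hw1 : ∑ a, w a = 1) (f : T → Ω → ℝ) (n : ℕ) (h : T → ℝ) :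
    2 ^ n * ∑ x : Fin n → Ω, (∏ t, w (x t)) *
        mx (fun τ => h τ + ∑ t, ((∑ a, w a * f τ a) - f τ (x t)))
      ≤ ∑ x : Fin n → Ω, (∏ t, w (x t)) * ∑ e : Fin n → Bool,
        mx (fun τ => h τ + 2 * ∑ t, sgn' (e t) * f τ (x t)) := by
  induction n generalizing h with
  | zero => simp
  | succ n ih =>
    -- one-step inequality
    have one : ∀ h : T → ℝ, 2 * ∑ a, w a * mx (fun τ => h τ + ((∑ a, w a * f τ a) - f τ a))
        ≤ ∑ a, w a * ∑ e, mx (fun τ => h τ + 2 * (sgn' e * f τ a)) := by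
      intro h
      have h1 : ∀ a, mx (fun τ => h τ + ((∑ a, w a * f τ a) - f τ a))
          ≤ ∑ b, w b * mx (fun τ => h τ + (f τ b - f τ a)) := by
        intro a
        refine mx_le fun τ => ?_
        calc h τ + ((∑ a, w a * f τ a) - f τ a) = ∑ b, w b * (h τ + (f τ b - f τ a)) := by
              simp only [mul_add, mul_sub, Finset.sum_add_distrib, Finset.sum_sub_distrib,
                ← Finset.sum_mul, hw1, one_mul]
          _ ≤ _ := Finset.sum_le_sum fun b _ => mul_le_mul_of_nonneg_left
              (le_mx (fun τ => h τ + (f τ b - f τ a)) τ) (hw b)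
      have h2 : ∀ a b, mx (fun τ => h τ + (f τ b - f τ a)) ≤
          (mx (fun τ => h τ + 2 * (sgn' true * f τ b)) +
            mx (fun τ => h τ + 2 * (sgn' false * f τ a))) / 2 := by
        intro a b
        refine mx_le fun τ => ?_
        have := le_mx (fun τ => h τ + 2 * (sgn' true * f τ b)) τ
        have := le_mx (fun τ => h τ + 2 * (sgn' false * f τ a)) τ
        simp [sgn'] at *
        linarith
      calc 2 * ∑ a, w a * mx (fun τ => h τ + ((∑ a, w a * f τ a) - f τ a))
          ≤ 2 * ∑ a, w a * ∑ b, w b * ((mx (fun τ => h τ + 2 * (sgn' true * f τ b)) +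
            mx (fun τ => h τ + 2 * (sgn' false * f τ a))) / 2) := by
            refine mul_le_mul_of_nonneg_left ?_ (by norm_num)
            refine Finset.sum_le_sum fun a _ => mul_le_mul_of_nonneg_left ?_ (hw a)
            refine (h1 a).trans ?_
            exact Finset.sum_le_sum fun b _ => mul_le_mul_of_nonneg_left (h2 a b) (hw b)
        _ = ∑ a, w a * ∑ e, mx (fun τ => h τ + 2 * (sgn' e * f τ a)) := by
            have aux : ∀ P Q : Ω → ℝ, 2 * ∑ a, w a * ∑ b, w b * ((P b + Q a) / 2)
                = ∑ a, w a * (P a + Q a) := by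
              intro P Q
              have e1 : ∀ a, ∑ b, w b * ((P b + Q a) / 2) = (∑ b, w b * P b) / 2 + Q a / 2 := by
                intro a
                have : ∀ b, w b * ((P b + Q a) / 2) = w b * P b / 2 + w b * (Q a / 2) := by
                  intro b; ring
                simp only [this, Finset.sum_add_distrib, ← Finset.sum_mul, ← Finset.sum_div, hw1,
                  one_mul]
              have e2 : ∀ a, w a * ((∑ b, w b * P b) / 2 + Q a / 2)
                  = w a * ((∑ b, w b * P b) / 2) + w a * Q a / 2 := by intro a; ring
              simp only [e1, e2, mul_add, Finset.sum_add_distrib, ← Finset.sum_mul,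
                ← Finset.sum_div, hw1, one_mul]
              ring
            simp only [Fintype.sum_bool]
            exact aux _ _
    rw [sum_cons, sum_cons]
    simp only [Fin.prod_univ_succ, Fin.sum_univ_succ, Fin.cons_zero, Fin.cons_succ]
    calc 2 ^ (n + 1) * ∑ a, ∑ x : Fin n → Ω, (w a * ∏ t, w (x t)) *
          mx (fun τ => h τ + ((∑ a, w a * f τ a) - f τ a +
            ∑ t, ((∑ a, w a * f τ a) - f τ (x t))))
        = 2 * ∑ a, w a * (2 ^ n * ∑ x : Fin n → Ω, (∏ t, w (x t)) *
          mx (fun τ => (h τ + ((∑ a, w a * f τ a) - f τ a)) +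
            ∑ t, ((∑ a, w a * f τ a) - f τ (x t)))) := by
          simp only [Finset.mul_sum, add_assoc]
          exact Finset.sum_congr rfl fun a _ => Finset.sum_congr rfl fun x _ => by ring
      _ ≤ 2 * ∑ a, w a * (∑ x : Fin n → Ω, (∏ t, w (x t)) * ∑ e : Fin n → Bool,
            mx (fun τ => (h τ + ((∑ a, w a * f τ a) - f τ a)) + 2 * ∑ t, sgn' (e t) * f τ (x t))) := by
          refine mul_le_mul_of_nonneg_left ?_ (by norm_num)
          exact Finset.sum_le_sum fun a _ => mul_le_mul_of_nonneg_left (ih _) (hw a)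
      _ = ∑ x : Fin n → Ω, (∏ t, w (x t)) * ∑ e : Fin n → Bool, (2 * ∑ a, w a *
            mx (fun τ => (h τ + 2 * ∑ t, sgn' (e t) * f τ (x t)) + ((∑ a, w a * f τ a) - f τ a))) := by
          simp only [Finset.mul_sum]
          rw [Finset.sum_comm]
          refine Finset.sum_congr rfl fun x _ => ?_
          rw [Finset.sum_comm]
          refine Finset.sum_congr rfl fun e _ => Finset.sum_congr rfl fun a _ => ?_
          have : (fun τ => (h τ + ((∑ a, w a * f τ a) - f τ a)) + ∑ i, 2 * (sgn' (e i) * f τ (x i)))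
            = (fun τ => (h τ + ∑ i, 2 * (sgn' (e i) * f τ (x i))) + ((∑ a, w a * f τ a) - f τ a)) := by
            funext τ; ring
          rw [this]; ring
      _ ≤ ∑ x : Fin n → Ω, (∏ t, w (x t)) * ∑ e : Fin n → Bool, (∑ a, w a * ∑ e',
            mx (fun τ => (h τ + 2 * ∑ t, sgn' (e t) * f τ (x t)) + 2 * (sgn' e' * f τ a))) := by
          refine Finset.sum_le_sum fun x _ => mul_le_mul_of_nonneg_left ?_
            (Finset.prod_nonneg fun t _ => hw _)
          exact Finset.sum_le_sum fun e _ => one _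
      _ = _ := by
          simp only [sum_cons n (fun e : Fin (n+1) → Bool => _), Fin.cons_zero, Fin.cons_succ]
          simp only [Finset.mul_sum]
          conv_rhs => rw [Finset.sum_comm]
          refine Finset.sum_congr rfl fun x _ => ?_
          rw [Finset.sum_comm]
          refine Finset.sum_congr rfl fun a _ => ?_
          rw [Finset.sum_comm]
          refine Finset.sum_congr rfl fun e' _ => Finset.sum_congr rfl fun e _ => ?_
          have : (fun τ => (h τ + ∑ i, 2 * (sgn' (e i) * f τ (x i))) + 2 * (sgn' e' * f τ a))
            = (fun τ => h τ + 2 * (sgn' e' * f τ a + ∑ i, sgn' (e i) * f τ (x i))) := by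
            funext τ; rw [← Finset.mul_sum]; ring
          rw [this]; ring

/-- Contraction principle. -/
lemma contraction {T : Type} [Fintype T] [Nonempty T] (L : ℝ) (n : ℕ) (u v : Fin n → T → ℝ)
    (huv : ∀ t τ τ', |v t τ - v t τ'| ≤ L * |u t τ - u t τ'|) (h : T → ℝ) :
    ∑ e : Fin n → Bool, mx (fun τ => h τ + ∑ t, sgn' (e t) * v t τ)
      ≤ ∑ e : Fin n → Bool, mx (fun τ => h τ + L * ∑ t, sgn' (e t) * u t τ) := by
  induction n generalizing h with
  | zero => simp
  | succ n ih =>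
    rw [sum_cons, sum_cons]
    simp only [Fin.sum_univ_succ, Fin.cons_zero, Fin.cons_succ]
    have one : ∀ h : T → ℝ, ∑ e, mx (fun τ => h τ + sgn' e * v 0 τ)
        ≤ ∑ e, mx (fun τ => h τ + L * (sgn' e * u 0 τ)) := by
      intro h
      simp only [Fintype.sum_bool]
      obtain ⟨τ, hτ⟩ := exists_mx (fun τ => h τ + sgn' true * v 0 τ)
      obtain ⟨τ', hτ'⟩ := exists_mx (fun τ => h τ + sgn' false * v 0 τ)
      rw [hτ, hτ']
      have a1 := le_mx (fun τ => h τ + L * (sgn' true * u 0 τ)) τ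
      have a2 := le_mx (fun τ => h τ + L * (sgn' true * u 0 τ)) τ'
      have a3 := le_mx (fun τ => h τ + L * (sgn' false * u 0 τ)) τ
      have a4 := le_mx (fun τ => h τ + L * (sgn' false * u 0 τ)) τ'
      have a5 := le_of_abs_le (huv 0 τ τ')
      simp only [sgn', if_true, Bool.false_eq_true, if_false] at *
      rcases abs_cases (u 0 τ - u 0 τ') with ⟨hh, _⟩ | ⟨hh, _⟩ <;> rw [hh] at a5 <;> linarith
    calc ∑ a, ∑ e : Fin n → Bool, mx (fun τ => h τ + (sgn' a * v 0 τ + ∑ t : Fin n, sgn' (e t) * v t.succ τ))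
        = ∑ a, ∑ e : Fin n → Bool, mx (fun τ => (h τ + sgn' a * v 0 τ) + ∑ t : Fin n, sgn' (e t) * v t.succ τ) := by
          simp only [add_assoc]
      _ ≤ ∑ a, ∑ e : Fin n → Bool, mx (fun τ => (h τ + sgn' a * v 0 τ) + L * ∑ t : Fin n, sgn' (e t) * u t.succ τ) :=
          Finset.sum_le_sum fun a _ => ih (fun t => u t.succ) (fun t => v t.succ)
            (fun t => huv t.succ) _
      _ = ∑ e : Fin n → Bool, ∑ a, mx (fun τ => (h τ + L * ∑ t : Fin n, sgn' (e t) * u t.succ τ) + sgn' a * v 0 τ) := by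
          rw [Finset.sum_comm]
          simp only [add_right_comm]
      _ ≤ ∑ e : Fin n → Bool, ∑ a, mx (fun τ => (h τ + L * ∑ t : Fin n, sgn' (e t) * u t.succ τ) + L * (sgn' a * u 0 τ)) :=
          Finset.sum_le_sum fun e _ => one _
      _ = _ := by
          rw [Finset.sum_comm]
          refine Finset.sum_congr rfl fun a _ => Finset.sum_congr rfl fun e _ => ?_
          congr 1; funext τ; ring

/-! ### Matrix tools -/

lemma herm_spec {ι : Type} [Fintype ι] [DecidableEq ι] (W : Matrix ι ι ℝ) (hH : W.IsHermitian) :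
    ∃ U : Matrix ι ι ℝ, Uᵀ * U = 1 ∧ U * Uᵀ = 1 ∧ W = U * diagonal hH.eigenvalues * Uᵀ := by
  refine ⟨hH.eigenvectorUnitary, ?_, ?_, ?_⟩
  · have h1 : star (hH.eigenvectorUnitary : Matrix ι ι ℝ) * (hH.eigenvectorUnitary : Matrix ι ι ℝ) = 1 :=
      Unitary.coe_star_mul_self _
    rwa [star_eq_conjTranspose,
      Matrix.conjTranspose_eq_transpose_of_trivial (hH.eigenvectorUnitary : Matrix ι ι ℝ)] at h1
  · have h2 : (hH.eigenvectorUnitary : Matrix ι ι ℝ) * star (hH.eigenvectorUnitary : Matrix ι ι ℝ) = 1 :=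
      Unitary.coe_mul_star_self _
    rwa [star_eq_conjTranspose,
      Matrix.conjTranspose_eq_transpose_of_trivial (hH.eigenvectorUnitary : Matrix ι ι ℝ)] at h2
  · have h3 := hH.spectral_theorem
    rw [Unitary.conjStarAlgAut_apply, star_eq_conjTranspose,
      Matrix.conjTranspose_eq_transpose_of_trivial (hH.eigenvectorUnitary : Matrix ι ι ℝ)] at h3
    exact h3

lemma spectral_pow {ι : Type} [Fintype ι] [DecidableEq ι] (W : Matrix ι ι ℝ) (hW : Wᵀ = W) :
    ∃ (P : Matrix ι ι ℝ) (lam : ι → ℝ), Pᵀ * P = 1 ∧ P * Pᵀ = 1 ∧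
      ∀ k : ℕ, W ^ k = P * diagonal (fun i => lam i ^ k) * Pᵀ := by
  have hH : W.IsHermitian := by
    rw [Matrix.IsHermitian, Matrix.conjTranspose_eq_transpose_of_trivial, hW]
  obtain ⟨U, h1, h2, h3⟩ := herm_spec W hH
  generalize hH.eigenvalues = lam at h3
  refine ⟨U, lam, h1, h2, fun k => ?_⟩
  induction k with
  | zero => simp [h2]
  | succ k ih =>
    rw [pow_succ, ih, h3]
    have : ∀ D1 D2 U V : Matrix ι ι ℝ, V * U = 1 → U * D1 * V * (U * D2 * V) = U * (D1 * D2) * V := by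
      intro D1 D2 U V h
      calc U * D1 * V * (U * D2 * V) = U * D1 * (V * U) * D2 * V := by simp only [Matrix.mul_assoc]
        _ = _ := by rw [h]; simp only [Matrix.mul_assoc, Matrix.one_mul]
    rw [this _ _ _ _ h1, Matrix.diagonal_mul_diagonal]
    simp only [pow_succ]

/-- operator norm bound by Schatten norm -/
lemma op_le_schatten {ι : Type} [Fintype ι] [DecidableEq ι] (X : Matrix ι ι ℝ) (hX : Xᵀ = X)
    (p : ℕ) (hp : 1 ≤ p) (g : ℝ) (hg : 0 ≤ g) (htr : (X ^ (2 * p)).trace ≤ g ^ (2 * p)) (z : ι → ℝ) :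
    (X *ᵥ z) ⬝ᵥ (X *ᵥ z) ≤ g ^ 2 * (z ⬝ᵥ z) := by
  obtain ⟨P, lam, h1, h2, h3⟩ := spectral_pow X hX
  have htr2 : (X ^ (2 * p)).trace = ∑ i, lam i ^ (2 * p) := by
    rw [h3, Matrix.trace_mul_cycle, h1, Matrix.one_mul, Matrix.trace_diagonal]
  have hlam : ∀ i, lam i ^ 2 ≤ g ^ 2 := by
    intro i
    have h4 : lam i ^ (2 * p) ≤ g ^ (2 * p) := by
      rw [htr2] at htr
      refine le_trans ?_ htr
      refine Finset.single_le_sum (f := fun i => lam i ^ (2 * p)) (fun j _ => ?_) (Finset.mem_univ i)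
      simp only [pow_mul]; positivity
    rw [pow_mul, pow_mul] at h4
    exact le_of_pow_le_pow_left₀ (by omega) (by positivity) h4
  have e1 : (X *ᵥ z) ⬝ᵥ (X *ᵥ z) = z ⬝ᵥ ((X ^ 2) *ᵥ z) := by
    rw [pow_two, ← Matrix.mulVec_mulVec]
    conv_lhs => rw [Matrix.dotProduct_mulVec, ← Matrix.mulVec_transpose, hX]
    rw [dotProduct_comm]
  have e2 : z ⬝ᵥ ((X ^ 2) *ᵥ z) = ∑ i, lam i ^ 2 * ((Pᵀ *ᵥ z) i) ^ 2 := by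
    rw [h3 2, ← Matrix.mulVec_mulVec, ← Matrix.mulVec_mulVec, Matrix.dotProduct_mulVec,
      ← Matrix.mulVec_transpose]
    simp only [dotProduct, Matrix.mulVec_diagonal]
    exact Finset.sum_congr rfl fun i _ => by ring
  have e3 : z ⬝ᵥ z = ∑ i, ((Pᵀ *ᵥ z) i) ^ 2 := by
    have : z ⬝ᵥ z = (Pᵀ *ᵥ z) ⬝ᵥ (Pᵀ *ᵥ z) := by
      rw [Matrix.dotProduct_mulVec, ← Matrix.mulVec_transpose, Matrix.mulVec_mulVec,
        Matrix.transpose_transpose, h2, Matrix.one_mulVec]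
    rw [this]; simp only [dotProduct]
    exact Finset.sum_congr rfl fun i _ => by ring
  rw [e1, e2, e3, Finset.mul_sum]
  exact Finset.sum_le_sum fun i _ => mul_le_mul_of_nonneg_right (hlam i) (sq_nonneg _)

/-- trace duality -/
lemma trace_duality {d1 d2 : ℕ} (A N : Matrix (Fin d1) (Fin d2) ℝ) (g : ℝ) (hg : 0 ≤ g)
    (hA : ∀ u, (Aᵀ *ᵥ u) ⬝ᵥ (Aᵀ *ᵥ u) ≤ g ^ 2 * (u ⬝ᵥ u)) :
    ∑ i, ∑ j, A i j * N i j ≤ g * traceNorm N := by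
  have hH := Matrix.isHermitian_mul_conjTranspose_self N
  obtain ⟨U, h1, h2, h3⟩ := herm_spec _ hH
  unfold traceNorm
  set lam := hH.eigenvalues with hlam
  have h3 : N * Nᵀ = U * diagonal lam * Uᵀ := by
    rw [← h3, Matrix.conjTranspose_eq_transpose_of_trivial]
  have e1 : ∑ i, ∑ j, A i j * N i j = ∑ i, ∑ j, (Uᵀ * A) i j * (Uᵀ * N) i j := by
    have t : ∀ B C : Matrix (Fin d1) (Fin d2) ℝ, ∑ i, ∑ j, B i j * C i j = (B * Cᵀ).trace := by
      intro B C; simp [Matrix.trace, Matrix.mul_apply]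
    rw [t, t, Matrix.transpose_mul, Matrix.transpose_transpose]
    rw [show Uᵀ * A * (Nᵀ * U) = Uᵀ * (A * Nᵀ) * U by simp only [Matrix.mul_assoc],
      Matrix.trace_mul_cycle, h2, Matrix.one_mul]
  rw [e1, Finset.mul_sum]
  refine Finset.sum_le_sum fun i _ => ?_
  have hN : ∑ j, (Uᵀ * N) i j ^ 2 = lam i := by
    have : (Uᵀ * N) * (Uᵀ * N)ᵀ = diagonal lam := by
      rw [Matrix.transpose_mul, Matrix.transpose_transpose,
        show Uᵀ * N * (Nᵀ * U) = Uᵀ * (N * Nᵀ) * U by simp only [Matrix.mul_assoc], h3]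
      rw [show Uᵀ * (U * diagonal lam * Uᵀ) * U
        = (Uᵀ * U) * diagonal lam * (Uᵀ * U) by simp only [Matrix.mul_assoc], h1,
        Matrix.one_mul, Matrix.mul_one]
    have h5 := congrFun (congrFun this i) i
    rw [Matrix.mul_apply, Matrix.diagonal_apply_eq] at h5
    simp only [Matrix.transpose_apply] at h5
    rw [← h5]
    exact Finset.sum_congr rfl fun j _ => by ring
  have hA' : ∑ j, (Uᵀ * A) i j ^ 2 ≤ g ^ 2 := by
    have h6 := hA (fun k => U k i)
    have h7 : (fun k => U k i) ⬝ᵥ (fun k => U k i) = 1 := by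
      have := congrFun (congrFun h1 i) i
      rw [Matrix.mul_apply, Matrix.one_apply_eq] at this
      simpa [dotProduct] using this
    rw [h7, mul_one] at h6
    refine le_trans (le_of_eq ?_) h6
    simp only [dotProduct, Matrix.mulVec, Matrix.mul_apply, Matrix.transpose_apply]
    refine Finset.sum_congr rfl fun j _ => ?_
    rw [sq]; congr 1 <;> exact Finset.sum_congr rfl fun k _ => by ring
  refine (Real.sum_mul_le_sqrt_mul_sqrt _ _ _).trans ?_
  rw [hN]
  refine mul_le_mul_of_nonneg_right ?_ (Real.sqrt_nonneg _)
  rw [← Real.sqrt_sq hg]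
  exact Real.sqrt_le_sqrt hA'

lemma trace_HWHY {ι : Type} [Fintype ι] [DecidableEq ι] (H P Q : Matrix ι ι ℝ) (hH : Hᵀ = H)
    (x y : ι → ℝ) :
    (H * (P * diagonal x * Pᵀ) * H * (Q * diagonal y * Qᵀ)).trace
      = ∑ i, ∑ j, (Pᵀ * H * Q) i j ^ 2 * (x i * y j) := by
  set K := Pᵀ * H * Q with hK
  have hKt : Kᵀ = Qᵀ * H * P := by
    rw [hK]; simp only [Matrix.transpose_mul, Matrix.transpose_transpose, hH, Matrix.mul_assoc]
  have : (H * (P * diagonal x * Pᵀ) * H * (Q * diagonal y * Qᵀ)).trace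
      = (diagonal x * K * (diagonal y * Kᵀ)).trace := by
    rw [hKt, hK]
    rw [show H * (P * diagonal x * Pᵀ) * H * (Q * diagonal y * Qᵀ)
      = (H * P) * (diagonal x * Pᵀ * H * Q * diagonal y * Qᵀ) by simp only [Matrix.mul_assoc],
      Matrix.trace_mul_comm]
    simp only [Matrix.mul_assoc]
  rw [this]
  simp only [Matrix.trace, Matrix.diag]
  refine Finset.sum_congr rfl fun i _ => ?_
  rw [Matrix.mul_apply]
  simp only [Matrix.diagonal_mul, Matrix.transpose_apply]
  exact Finset.sum_congr rfl fun j _ => by ring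

lemma scalar_gm (x y : ℝ) (p q : ℕ) (hq : q ≤ 2 * p) :
    x ^ q * y ^ (2 * p - q) + x ^ (2 * p - q) * y ^ q ≤ x ^ (2 * p) + y ^ (2 * p) := by
  obtain ⟨s, hs⟩ : ∃ s, s = 2 * p - q := ⟨_, rfl⟩
  have hsq : 2 * p = q + s := by omega
  have key : |x| ^ q * |y| ^ s + |x| ^ s * |y| ^ q ≤ |x| ^ (2 * p) + |y| ^ (2 * p) := by
    rw [hsq, pow_add, pow_add]
    have hx := abs_nonneg x
    have hy := abs_nonneg y
    have : 0 ≤ (|x| ^ q - |y| ^ q) * (|x| ^ s - |y| ^ s) := by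
      rcases le_total (|x|) (|y|) with h | h
      · exact mul_nonneg_of_nonpos_of_nonpos (sub_nonpos.mpr (pow_le_pow_left₀ hx h q))
          (sub_nonpos.mpr (pow_le_pow_left₀ hx h s))
      · exact mul_nonneg (sub_nonneg.mpr (pow_le_pow_left₀ hy h q))
          (sub_nonneg.mpr (pow_le_pow_left₀ hy h s))
    nlinarith
  have ev : Even (2 * p) := even_two_mul p
  rw [ev.pow_abs, ev.pow_abs] at key
  rw [← hs]
  have a1 : x ^ q * y ^ s ≤ |x| ^ q * |y| ^ s := by
    rw [← abs_pow, ← abs_pow, ← abs_mul]; exact le_abs_self _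
  have a2 : x ^ s * y ^ q ≤ |x| ^ s * |y| ^ q := by
    rw [← abs_pow, ← abs_pow, ← abs_mul]; exact le_abs_self _
  linarith

lemma matrix_gm {ι : Type} [Fintype ι] [DecidableEq ι] (H W Y : Matrix ι ι ℝ) (hH : Hᵀ = H)
    (hW : Wᵀ = W) (hY : Yᵀ = Y) (p q : ℕ) (hq : q ≤ 2 * p) :
    (H * W ^ q * H * Y ^ (2 * p - q)).trace + (H * W ^ (2 * p - q) * H * Y ^ q).trace
      ≤ (H * H * W ^ (2 * p)).trace + (H * H * Y ^ (2 * p)).trace := by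
  obtain ⟨P, x, -, -, hP⟩ := spectral_pow W hW
  obtain ⟨Q, y, -, -, hQ⟩ := spectral_pow Y hY
  have e1 : (H * H * W ^ (2 * p)).trace = (H * W ^ (2 * p) * H * Y ^ 0).trace := by
    rw [pow_zero, Matrix.mul_one, Matrix.trace_mul_cycle H (W ^ (2 * p)) H]
  have e2 : (H * H * Y ^ (2 * p)).trace = (H * W ^ 0 * H * Y ^ (2 * p)).trace := by
    rw [pow_zero, Matrix.mul_one]
  rw [e1, e2]
  simp only [hP, hQ, trace_HWHY _ _ _ hH, ← Finset.sum_add_distrib, ← mul_add, pow_zero, mul_one,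
    one_mul]
  exact Finset.sum_le_sum fun i _ => Finset.sum_le_sum fun j _ =>
    mul_le_mul_of_nonneg_left (scalar_gm _ _ p q hq) (sq_nonneg _)

lemma pow_sub_pow_nc {ι : Type} [Fintype ι] [DecidableEq ι] (W Y : Matrix ι ι ℝ) (m : ℕ) :
    W ^ (m + 1) - Y ^ (m + 1) = ∑ q ∈ Finset.range (m + 1), W ^ q * (W - Y) * Y ^ (m - q) := by
  induction m with
  | zero => simp
  | succ m ih =>
    rw [Finset.sum_range_succ, Nat.sub_self, pow_zero, mul_one]
    have : ∑ q ∈ Finset.range (m + 1), W ^ q * (W - Y) * Y ^ (m + 1 - q)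
      = (∑ q ∈ Finset.range (m + 1), W ^ q * (W - Y) * Y ^ (m - q)) * Y := by
      rw [Finset.sum_mul]
      refine Finset.sum_congr rfl fun q hq => ?_
      have : q ≤ m := by have := Finset.mem_range.mp hq; omega
      rw [show m + 1 - q = (m - q) + 1 by omega, pow_succ]
      simp only [mul_assoc]
    rw [this, ← ih, pow_succ W (m+1), pow_succ Y (m+1)]
    noncomm_ring

noncomputable def rsum {ι : Type} {n : ℕ} (H : Fin n → Matrix ι ι ℝ) (e : Fin n → Bool) :
    Matrix ι ι ℝ := ∑ t, sgn' (e t) • H t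

lemma rsum_symm {ι : Type} {n : ℕ} (H : Fin n → Matrix ι ι ℝ) (hH : ∀ t, (H t)ᵀ = H t)
    (e : Fin n → Bool) : (rsum H e)ᵀ = rsum H e := by
  simp [rsum, Matrix.transpose_sum, hH]

def flipAt {n : ℕ} (t : Fin n) (e : Fin n → Bool) : Fin n → Bool :=
  Function.update e t (!(e t))

lemma flipAt_invol {n : ℕ} (t : Fin n) : Function.Involutive (flipAt t) := by
  intro e; simp [flipAt]

lemma sum_flip {n : ℕ} (t : Fin n) (f : (Fin n → Bool) → ℝ) :
    ∑ e, f (flipAt t e) = ∑ e, f e :=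
  Fintype.sum_equiv (flipAt_invol t).toPerm _ _ (fun _ => rfl)

lemma rsum_flip {ι : Type} {n : ℕ} (H : Fin n → Matrix ι ι ℝ) (t : Fin n) (e : Fin n → Bool) :
    rsum H e - rsum H (flipAt t e) = (2 * sgn' (e t)) • H t := by
  rw [rsum, rsum, ← Finset.sum_sub_distrib, Finset.sum_eq_single t]
  · rw [← sub_smul]; congr 1
    simp only [flipAt, Function.update_self]
    cases e t <;> simp [sgn'] <;> norm_num
  · intro s _ hs
    simp [flipAt, Function.update_of_ne hs]
  · simp

lemma khintchine_step {ι : Type} [Fintype ι] [DecidableEq ι] {n : ℕ} (H : Fin n → Matrix ι ι ℝ)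
    (hH : ∀ t, (H t)ᵀ = H t) (p : ℕ) :
    ∑ e, ((rsum H e) ^ (2 * p + 2)).trace
      ≤ (2 * p + 1) * ∑ e, ((∑ t, H t * H t) * (rsum H e) ^ (2 * p)).trace := by
  have h1 : ∀ e, ((rsum H e) ^ (2 * p + 2)).trace
      = ∑ t, sgn' (e t) * (H t * (rsum H e) ^ (2 * p + 1)).trace := by
    intro e
    rw [show 2 * p + 2 = (2 * p + 1) + 1 by ring, pow_succ']
    conv_lhs => enter [1, 1]; rw [rsum]
    rw [Finset.sum_mul, Matrix.trace_sum]
    simp only [Matrix.smul_mul, Matrix.trace_smul, smul_eq_mul]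
  have h2 : ∀ t, ∑ e, sgn' (e t) * (H t * (rsum H e) ^ (2 * p + 1)).trace
      = ∑ e, ∑ q ∈ Finset.range (2 * p + 1),
        (H t * (rsum H e) ^ q * H t * (rsum H (flipAt t e)) ^ (2 * p - q)).trace := by
    intro t
    have h3 : ∑ e, sgn' (e t) * (H t * (rsum H e) ^ (2 * p + 1)).trace
        = ∑ e, (1 / 2) * (sgn' (e t) * (H t * ((rsum H e) ^ (2 * p + 1)
            - (rsum H (flipAt t e)) ^ (2 * p + 1))).trace) := by
      have h4 := sum_flip t (fun e => sgn' (e t) * (H t * (rsum H e) ^ (2 * p + 1)).trace)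
      have h5 : ∀ e, sgn' (flipAt t e t) = - sgn' (e t) := by
        intro e; simp only [flipAt, Function.update_self]; cases e t <;> simp [sgn']
      simp only [h5, neg_mul, Finset.sum_neg_distrib] at h4
      simp only [Matrix.mul_sub, Matrix.trace_sub, mul_sub, Finset.sum_sub_distrib,
        ← Finset.mul_sum]
      linarith
    rw [h3]
    refine Finset.sum_congr rfl fun e _ => ?_
    rw [pow_sub_pow_nc, rsum_flip, Finset.mul_sum, Matrix.trace_sum, Finset.mul_sum, Finset.mul_sum]
    refine Finset.sum_congr rfl fun q _ => ?_
    simp only [Matrix.mul_smul, Matrix.smul_mul, Matrix.trace_smul, smul_eq_mul, Matrix.mul_assoc]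
    have : sgn' (e t) * sgn' (e t) = 1 := by cases e t <;> simp [sgn']
    linear_combination ((H t * (rsum H e ^ q * (H t * rsum H (flipAt t e) ^ (2 * p - q)))).trace) * this
  have h6 : ∀ t, ∑ e, ∑ q ∈ Finset.range (2 * p + 1),
        (H t * (rsum H e) ^ q * H t * (rsum H (flipAt t e)) ^ (2 * p - q)).trace
      ≤ (2 * p + 1) * ∑ e, (H t * H t * (rsum H e) ^ (2 * p)).trace := by
    intro t
    have h7 : ∀ e, 2 * ∑ q ∈ Finset.range (2 * p + 1),
        (H t * (rsum H e) ^ q * H t * (rsum H (flipAt t e)) ^ (2 * p - q)).trace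
        ≤ (2 * p + 1) * ((H t * H t * (rsum H e) ^ (2 * p)).trace
          + (H t * H t * (rsum H (flipAt t e)) ^ (2 * p)).trace) := by
      intro e
      have h8 : ∑ q ∈ Finset.range (2 * p + 1),
          (H t * (rsum H e) ^ q * H t * (rsum H (flipAt t e)) ^ (2 * p - q)).trace
          = ∑ q ∈ Finset.range (2 * p + 1),
          (H t * (rsum H e) ^ (2 * p - q) * H t * (rsum H (flipAt t e)) ^ q).trace := by
        rw [← Finset.sum_range_reflect]
        refine Finset.sum_congr rfl fun q hq => ?_
        have : q ≤ 2 * p := by have := Finset.mem_range.mp hq; omega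
        rw [show 2 * p + 1 - 1 - q = 2 * p - q by omega, show 2 * p - (2 * p - q) = q by omega]
      rw [two_mul]
      nth_rewrite 2 [h8]
      rw [← Finset.sum_add_distrib]
      refine (Finset.sum_le_sum fun q hq => matrix_gm (H t) _ _ (hH t) (rsum_symm H hH e)
        (rsum_symm H hH (flipAt t e)) p q (by have := Finset.mem_range.mp hq; omega)).trans ?_
      rw [Finset.sum_const, Finset.card_range, nsmul_eq_mul]
      push_cast
      exact le_refl _
    have h9 := Finset.sum_le_sum fun e (_ : e ∈ Finset.univ) => h7 e
    rw [← Finset.mul_sum, ← Finset.mul_sum, Finset.sum_add_distrib,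
      sum_flip t (fun e => (H t * H t * (rsum H e) ^ (2 * p)).trace)] at h9
    linarith
  simp only [h1]
  rw [Finset.sum_comm]
  refine (Finset.sum_le_sum fun t _ => (h2 t).le.trans (h6 t)).trans ?_
  rw [← Finset.mul_sum]
  apply le_of_eq; congr 1
  rw [Finset.sum_comm]
  refine Finset.sum_congr rfl fun e _ => ?_
  rw [Finset.sum_mul, Matrix.trace_sum]

lemma even_pow_diag_nonneg {ι : Type} [Fintype ι] [DecidableEq ι] (X : Matrix ι ι ℝ) (hX : Xᵀ = X)
    (p : ℕ) (i : ι) : 0 ≤ (X ^ (2 * p)) i i := by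
  have h : (X ^ p)ᵀ = X ^ p := by rw [Matrix.transpose_pow, hX]
  rw [two_mul, pow_add]
  nth_rewrite 2 [← h]
  rw [Matrix.mul_apply]
  exact Finset.sum_nonneg fun j _ => by rw [Matrix.transpose_apply]; exact mul_self_nonneg _

lemma even_pow_trace_nonneg {ι : Type} [Fintype ι] [DecidableEq ι] (X : Matrix ι ι ℝ) (hX : Xᵀ = X)
    (p : ℕ) : 0 ≤ (X ^ (2 * p)).trace :=
  Finset.sum_nonneg fun i _ => even_pow_diag_nonneg X hX p i

lemma khintchine {ι : Type} [Fintype ι] [DecidableEq ι] {n : ℕ} (H : Fin n → Matrix ι ι ℝ)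
    (hH : ∀ t, (H t)ᵀ = H t) (dv : ι → ℝ) (hdv : ∑ t, H t * H t = diagonal dv)
    (v : ℝ) (hv0 : 0 ≤ v) (hv : ∀ i, dv i ≤ v) (p k : ℕ) (hk : k ≤ p) :
    ∑ e, ((rsum H e) ^ (2 * k)).trace ≤ (2 * p * v) ^ k * (2 ^ n * Fintype.card ι) := by
  induction k with
  | zero => simp
  | succ k ih =>
    have ih := ih (by omega)
    have h1 := khintchine_step H hH k
    have h2 : ∑ e, ((∑ t, H t * H t) * (rsum H e) ^ (2 * k)).trace
        ≤ v * ∑ e, ((rsum H e) ^ (2 * k)).trace := by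
      rw [Finset.mul_sum]
      refine Finset.sum_le_sum fun e _ => ?_
      rw [hdv]
      simp only [Matrix.trace, Matrix.diag, Matrix.diagonal_mul, Finset.mul_sum]
      exact Finset.sum_le_sum fun i _ => mul_le_mul_of_nonneg_right (hv i)
        (even_pow_diag_nonneg _ (rsum_symm H hH e) k i)
    have h0 : 0 ≤ ∑ e, ((rsum H e) ^ (2 * k)).trace :=
      Finset.sum_nonneg fun e _ => even_pow_trace_nonneg _ (rsum_symm H hH e) k
    have hkp : (2 * (k:ℝ) + 1) ≤ 2 * p := by
      have : ((k + 1 : ℕ):ℝ) ≤ p := by exact_mod_cast hk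
      push_cast at this; linarith
    calc ∑ e, ((rsum H e) ^ (2 * (k + 1))).trace
        ≤ (2 * k + 1) * ∑ e, ((∑ t, H t * H t) * (rsum H e) ^ (2 * k)).trace := h1
      _ ≤ (2 * k + 1) * (v * ∑ e, ((rsum H e) ^ (2 * k)).trace) :=
          mul_le_mul_of_nonneg_left h2 (by positivity)
      _ ≤ (2 * p) * (v * ∑ e, ((rsum H e) ^ (2 * k)).trace) :=
          mul_le_mul_of_nonneg_right hkp (mul_nonneg hv0 h0)
      _ = (2 * p * v) * ∑ e, ((rsum H e) ^ (2 * k)).trace := by ring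
      _ ≤ (2 * p * v) * ((2 * p * v) ^ k * (2 ^ n * Fintype.card ι)) :=
          mul_le_mul_of_nonneg_left ih (by positivity)
      _ = _ := by ring

/-! ### Expected spectral norm -/

/-- Hermitian dilation. -/
noncomputable def dil {d1 d2 : ℕ} (B : Matrix (Fin d1) (Fin d2) ℝ) :
    Matrix (Fin d1 ⊕ Fin d2) (Fin d1 ⊕ Fin d2) ℝ := fromBlocks 0 B Bᵀ 0

lemma dil_symm {d1 d2 : ℕ} (B : Matrix (Fin d1) (Fin d2) ℝ) : (dil B)ᵀ = dil B := by
  simp [dil, Matrix.fromBlocks_transpose]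

noncomputable def dvar {d1 d2 : ℕ} (a : Fin d1 → Fin d2 → ℝ) (s : Fin d1 × Fin d2) :
    Fin d1 ⊕ Fin d2 → ℝ :=
  Sum.elim (fun i => if s.1 = i then a s.1 s.2 ^ 2 else 0)
    (fun j => if s.2 = j then a s.1 s.2 ^ 2 else 0)

lemma dil_sq {d1 d2 : ℕ} (a : Fin d1 → Fin d2 → ℝ) (s : Fin d1 × Fin d2) :
    dil (Matrix.single s.1 s.2 (a s.1 s.2)) * dil (Matrix.single s.1 s.2 (a s.1 s.2))
      = diagonal (dvar a s) := by
  rw [dil, Matrix.fromBlocks_multiply]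
  simp only [Matrix.transpose_single, Matrix.single_mul_single_same, Matrix.zero_mul,
    Matrix.mul_zero, zero_add, add_zero]
  ext (i | i) (j | j)
  · by_cases h : i = j
    · subst h
      simp [dvar, Matrix.single_apply, sq]
    · simp only [fromBlocks_apply₁₁, Matrix.single_apply]
      rw [Matrix.diagonal_apply_ne _ (by simpa using h), if_neg]
      rintro ⟨h1, h2⟩; exact h (h1.symm.trans h2)
  · simp
  · simp
  · by_cases h : i = j
    · subst h
      simp [dvar, Matrix.single_apply, sq]
    · simp only [fromBlocks_apply₂₂, Matrix.single_apply]
      rw [Matrix.diagonal_apply_ne _ (by simpa using h), if_neg]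
      rintro ⟨h1, h2⟩; exact h (h1.symm.trans h2)

lemma dvar_nonneg {d1 d2 : ℕ} (a : Fin d1 → Fin d2 → ℝ) (s : Fin d1 × Fin d2)
    (k : Fin d1 ⊕ Fin d2) : 0 ≤ dvar a s k := by
  rcases k with i | j <;> simp only [dvar, Sum.elim_inl, Sum.elim_inr] <;> split_ifs <;> positivity

lemma rsum_dil {d1 d2 n : ℕ} (B : Fin n → Matrix (Fin d1) (Fin d2) ℝ) (e : Fin n → Bool) :
    rsum (fun t => dil (B t)) e = dil (∑ t, sgn' (e t) • B t) := by
  rw [rsum]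
  ext (i | i) (j | j) <;> simp [dil, Matrix.sum_apply]

lemma dil_op {d1 d2 : ℕ} (A : Matrix (Fin d1) (Fin d2) ℝ) (g : ℝ)
    (h : ∀ z, (dil A *ᵥ z) ⬝ᵥ (dil A *ᵥ z) ≤ g ^ 2 * (z ⬝ᵥ z)) (u : Fin d1 → ℝ) :
    (Aᵀ *ᵥ u) ⬝ᵥ (Aᵀ *ᵥ u) ≤ g ^ 2 * (u ⬝ᵥ u) := by
  have := h (Sum.elim u 0)
  simpa [dil, Matrix.fromBlocks_mulVec, dotProduct, Fintype.sum_sum_type] using this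

lemma cond_bound {d1 d2 n : ℕ} {T : Type} [Fintype T] [Nonempty T]
    (a : Fin d1 → Fin d2 → ℝ) (S : Fin n → Fin d1 × Fin d2) (M N : T → Matrix (Fin d1) (Fin d2) ℝ)
    (hMN : ∀ τ i j, M τ i j = a i j * N τ i j) (B : ℝ) (hB : ∀ τ, traceNorm (N τ) ≤ B)
    (hB0 : 0 ≤ B) (p : ℕ) (hp : 1 ≤ p) (hd : ((d1 + d2 : ℕ) : ℝ) ≤ Real.exp p)
    (v : ℝ) (hv0 : 0 ≤ v) (hv : ∀ k, ∑ t, dvar a (S t) k ≤ v) :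
    ∑ e : Fin n → Bool, mx (fun τ => ∑ t, sgn' (e t) * M τ (S t).1 (S t).2)
      ≤ 2 ^ n * (B * Real.sqrt (2 * Real.exp 1 * p * v)) := by
  set Bm : Fin n → Matrix (Fin d1) (Fin d2) ℝ :=
    fun t => Matrix.single (S t).1 (S t).2 (a (S t).1 (S t).2) with hBm
  set H := fun t => dil (Bm t) with hH
  have hHs : ∀ t, (H t)ᵀ = H t := fun t => dil_symm _
  have htr0 : ∀ e, 0 ≤ ((rsum H e) ^ (2 * p)).trace :=
    fun e => even_pow_trace_nonneg _ (rsum_symm H hHs e) p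
  set g : (Fin n → Bool) → ℝ :=
    fun e => (((rsum H e) ^ (2 * p)).trace) ^ (((2 * p : ℕ) : ℝ)⁻¹) with hg
  have hg0 : ∀ e, 0 ≤ g e := fun e => Real.rpow_nonneg (htr0 e) _
  have hgp : ∀ e, g e ^ (2 * p) = ((rsum H e) ^ (2 * p)).trace := fun e =>
    Real.rpow_inv_natCast_pow (htr0 e) (by omega)
  have h1 : ∀ e, mx (fun τ => ∑ t, sgn' (e t) * M τ (S t).1 (S t).2) ≤ B * g e := by
    intro e
    refine mx_le fun τ => ?_
    set A : Matrix (Fin d1) (Fin d2) ℝ := ∑ t, sgn' (e t) • Bm t with hA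
    have h2 : ∑ t, sgn' (e t) * M τ (S t).1 (S t).2 = ∑ i, ∑ j, A i j * N τ i j := by
      simp only [hA, Matrix.sum_apply, Matrix.smul_apply, smul_eq_mul, Finset.sum_mul]
      have : ∀ t, sgn' (e t) * M τ (S t).1 (S t).2
          = ∑ i, ∑ j, sgn' (e t) * Bm t i j * N τ i j := by
        intro t
        rw [Finset.sum_eq_single (S t).1, Finset.sum_eq_single (S t).2]
        · rw [hMN]; simp [hBm, mul_assoc]
        · intro j _ hj; simp [hBm, Matrix.single_apply, hj.symm]
        · simp
        · intro i _ hi; simp [hBm, Matrix.single_apply, hi.symm]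
        · simp
      simp only [this]
      rw [Finset.sum_comm]
      exact Finset.sum_congr rfl fun i _ => Finset.sum_comm
    rw [h2]
    have h3 : rsum H e = dil A := rsum_dil Bm e
    have h4 := trace_duality A (N τ) (g e) (hg0 e) (dil_op A (g e) (by
      rw [← h3]
      exact op_le_schatten (rsum H e) (rsum_symm H hHs e) p hp (g e) (hg0 e) (hgp e).ge))
    rw [mul_comm B]
    exact h4.trans (mul_le_mul_of_nonneg_left (hB τ) (hg0 e))
  have hdv : ∑ t, H t * H t = diagonal (fun k => ∑ t, dvar a (S t) k) := by
    simp only [hH, hBm, dil_sq]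
    ext i j
    rw [Matrix.sum_apply]
    by_cases h : i = j
    · subst h; simp
    · simp [h]
  have hk := khintchine H hHs _ hdv v hv0 hv p p le_rfl
  have h2n : (0:ℝ) < 2 ^ n := by positivity
  have hJ := Real.pow_arith_mean_le_arith_mean_pow Finset.univ (fun _ : Fin n → Bool => ((2:ℝ) ^ n)⁻¹) g
    (fun _ _ => by positivity) (by simp) (fun e _ => hg0 e) (2 * p)
  simp only [← Finset.mul_sum, hgp] at hJ
  have h5 : (((2:ℝ) ^ n)⁻¹ * ∑ e, g e) ^ (2 * p) ≤ (2 * Real.exp 1 * p * v) ^ p := by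
    refine hJ.trans ?_
    refine (mul_le_mul_of_nonneg_left hk (by positivity)).trans ?_
    have : ((Fintype.card (Fin d1 ⊕ Fin d2) : ℕ) : ℝ) ≤ Real.exp 1 ^ p := by
      rw [← Real.exp_nat_mul, mul_one]
      simpa using hd
    calc ((2:ℝ) ^ n)⁻¹ * ((2 * p * v) ^ p * (2 ^ n * Fintype.card (Fin d1 ⊕ Fin d2)))
        = (2 * p * v) ^ p * Fintype.card (Fin d1 ⊕ Fin d2) := by field_simp
      _ ≤ (2 * p * v) ^ p * Real.exp 1 ^ p := mul_le_mul_of_nonneg_left this (by positivity)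
      _ = _ := by rw [← mul_pow]; congr 1; ring
  rw [pow_mul] at h5
  have h6 := le_of_pow_le_pow_left₀ (by omega) (by positivity) h5
  have h7 := Real.le_sqrt_of_sq_le h6
  calc ∑ e : Fin n → Bool, mx (fun τ => ∑ t, sgn' (e t) * M τ (S t).1 (S t).2)
      ≤ ∑ e, B * g e := Finset.sum_le_sum fun e _ => h1 e
    _ = 2 ^ n * (B * (((2:ℝ) ^ n)⁻¹ * ∑ e, g e)) := by rw [← Finset.mul_sum]; field_simp
    _ ≤ _ := by gcongr

lemma expected_max {Ω ι : Type} [Fintype Ω] [Fintype ι] [Nonempty ι] (w : Ω → ℝ)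
    (hw : ∀ a, 0 ≤ w a) (hw1 : ∑ a, w a = 1) (q : ι → Ω → ℝ) (hq : ∀ k a, 0 ≤ q k a)
    (θ : ℝ) (hθ : 0 < θ) (hq1 : ∀ k a, θ * q k a ≤ 1) (m : ℝ) (hm : ∀ k, ∑ a, w a * q k a ≤ m)
    (n : ℕ) :
    ∑ x : Fin n → Ω, (∏ t, w (x t)) * mx (fun k => ∑ t, q k (x t))
      ≤ Real.log (Fintype.card ι) / θ + 2 * n * m := by
  have hcard : (0:ℝ) < Fintype.card ι := by exact_mod_cast Fintype.card_pos
  set c : ℝ := Fintype.card ι * Real.exp (n * (2 * θ * m)) with hc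
  have hc0 : 0 < c := by positivity
  have h1 : ∀ x : Fin n → Ω, θ * mx (fun k => ∑ t, q k (x t))
      ≤ Real.log c - 1 + (∑ k, ∏ t, Real.exp (θ * q k (x t))) / c := by
    intro x
    obtain ⟨k, hk⟩ := exists_mx (fun k => ∑ t, q k (x t))
    rw [hk]
    have h2 : Real.exp (θ * ∑ t, q k (x t)) ≤ ∑ k, ∏ t, Real.exp (θ * q k (x t)) := by
      rw [Finset.mul_sum, Real.exp_sum]
      exact Finset.single_le_sum (f := fun k => ∏ t, Real.exp (θ * q k (x t)))
        (fun j _ => Finset.prod_nonneg fun t _ => Real.exp_nonneg _) (Finset.mem_univ k)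
    have h3 := Real.log_le_sub_one_of_pos (div_pos (Real.exp_pos (θ * ∑ t, q k (x t))) hc0)
    rw [Real.log_div (Real.exp_pos _).ne' hc0.ne', Real.log_exp] at h3
    have h4 := div_le_div_of_nonneg_right h2 hc0.le
    linarith
  have h5 : ∀ k, ∑ x : Fin n → Ω, (∏ t, w (x t)) * ∏ t, Real.exp (θ * q k (x t))
      ≤ Real.exp (n * (2 * θ * m)) := by
    intro k
    simp only [← Finset.prod_mul_distrib]
    rw [sum_prod_eq n (fun a => w a * Real.exp (θ * q k a)), Real.exp_nat_mul]
    refine pow_le_pow_left₀ (Finset.sum_nonneg fun a _ => mul_nonneg (hw a) (Real.exp_nonneg _)) ?_ n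
    have h6 : ∀ a, Real.exp (θ * q k a) ≤ 1 + 2 * θ * q k a := by
      intro a
      have h0 : 0 ≤ θ * q k a := mul_nonneg hθ.le (hq k a)
      have := Real.abs_exp_sub_one_sub_id_le (x := θ * q k a) (by rw [abs_of_nonneg h0]; exact hq1 k a)
      have := le_of_abs_le this
      have := hq1 k a
      nlinarith
    calc ∑ a, w a * Real.exp (θ * q k a) ≤ ∑ a, w a * (1 + 2 * θ * q k a) :=
          Finset.sum_le_sum fun a _ => mul_le_mul_of_nonneg_left (h6 a) (hw a)
      _ = 1 + 2 * θ * ∑ a, w a * q k a := by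
          nth_rewrite 2 [← hw1]
          rw [Finset.mul_sum, ← Finset.sum_add_distrib]
          exact Finset.sum_congr rfl fun a _ => by ring
      _ ≤ 1 + 2 * θ * m := by have := hm k; gcongr
      _ ≤ _ := by rw [add_comm]; exact Real.add_one_le_exp _
  have h7 : θ * ∑ x : Fin n → Ω, (∏ t, w (x t)) * mx (fun k => ∑ t, q k (x t)) ≤ Real.log c := by
    calc θ * ∑ x : Fin n → Ω, (∏ t, w (x t)) * mx (fun k => ∑ t, q k (x t))
        = ∑ x : Fin n → Ω, (∏ t, w (x t)) * (θ * mx (fun k => ∑ t, q k (x t))) := by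
          rw [Finset.mul_sum]; exact Finset.sum_congr rfl fun x _ => by ring
      _ ≤ ∑ x : Fin n → Ω, (∏ t, w (x t)) * (Real.log c - 1 +
            (∑ k, ∏ t, Real.exp (θ * q k (x t))) / c) :=
          Finset.sum_le_sum fun x _ => mul_le_mul_of_nonneg_left (h1 x)
            (Finset.prod_nonneg fun t _ => hw _)
      _ = (Real.log c - 1) +
            (∑ k, ∑ x : Fin n → Ω, (∏ t, w (x t)) * ∏ t, Real.exp (θ * q k (x t))) / c := by
          simp only [mul_add, Finset.sum_add_distrib, ← Finset.sum_mul, sum_prod_one n w hw1, one_mul]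
          congr 1
          rw [Finset.sum_comm, Finset.sum_div]
          refine Finset.sum_congr rfl fun x _ => ?_
          rw [← Finset.mul_sum, mul_div_assoc]
      _ ≤ (Real.log c - 1) + (∑ _k : ι, Real.exp (n * (2 * θ * m))) / c := by
          have := Finset.sum_le_sum fun k (_ : k ∈ Finset.univ) => h5 k
          have := div_le_div_of_nonneg_right this hc0.le
          linarith
      _ = Real.log c := by
          rw [Finset.sum_const, Finset.card_univ, nsmul_eq_mul, ← hc, div_self hc0.ne']; ring
  have h8 : Real.log c = Real.log (Fintype.card ι) + n * (2 * θ * m) := by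
    rw [hc, Real.log_mul hcard.ne' (Real.exp_pos _).ne', Real.log_exp]
  rw [h8] at h7
  have : Real.log (Fintype.card ι) / θ + 2 * n * m
      = (Real.log (Fintype.card ι) + n * (2 * θ * m)) / θ := by field_simp
  rw [this, le_div_iff₀ hθ]
  linarith

/-! ### KL lower bound -/

lemma kl_hellinger (p q : ℝ) (hp : 0 < p) (hq : 0 < q) :
    2 * p - 2 * (Real.sqrt p * Real.sqrt q) ≤ p * Real.log (p / q) := by
  have hsp : 0 < Real.sqrt p := Real.sqrt_pos.mpr hp
  have hsq : 0 < Real.sqrt q := Real.sqrt_pos.mpr hq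
  have h := Real.log_le_sub_one_of_pos (div_pos hsq hsp)
  rw [Real.log_div hsq.ne' hsp.ne', Real.log_sqrt hp.le, Real.log_sqrt hq.le] at h
  rw [Real.log_div hp.ne' hq.ne']
  have h2 : p * (Real.sqrt q / Real.sqrt p) = Real.sqrt p * Real.sqrt q := by
    nth_rewrite 1 [← Real.mul_self_sqrt hp.le]; field_simp
  have h3 := mul_le_mul_of_nonneg_left h hp.le
  nlinarith

lemma kl_lower (F : ℝ → ℝ) (hF : Differentiable ℝ F) (h01 : ∀ x, 0 < F x ∧ F x < 1) (α β : ℝ)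
    (hF' : ∀ x ∈ Set.Icc (-α) α, deriv F x ≠ 0)
    (hβ : ∀ x ∈ Set.Icc (-α) α, F x * (1 - F x) / (deriv F x) ^ 2 ≤ β)
    (a b : ℝ) (ha : a ∈ Set.Icc (-α) α) (hb : b ∈ Set.Icc (-α) α) :
    (a - b) ^ 2 ≤ 10 * β * (F a * Real.log (F a / F b) + (1 - F a) * Real.log ((1 - F a) / (1 - F b))) := by
  set G : ℝ → ℝ := fun x => Real.arcsin (Real.sqrt (F x)) with hG
  have hs1 : ∀ x, Real.sqrt (F x) < 1 := fun x => by
    rw [Real.sqrt_lt' one_pos]; simpa using (h01 x).2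
  have hs0 : ∀ x, 0 < Real.sqrt (F x) := fun x => Real.sqrt_pos.mpr (h01 x).1
  have hder : ∀ x, HasDerivAt G (1 / Real.sqrt (1 - Real.sqrt (F x) ^ 2) *
      (deriv F x / (2 * Real.sqrt (F x)))) x := by
    intro x
    have h1 := (hF x).hasDerivAt.sqrt (h01 x).1.ne'
    exact (Real.hasDerivAt_arcsin (by linarith [hs0 x]) (hs1 x).ne).comp x h1
  have hβ0 : 0 < β := by
    have := hβ a ha
    have h1 : 0 < F a * (1 - F a) / (deriv F a) ^ 2 := by
      have := h01 a
      have h2 : 0 < 1 - F a := by linarith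
      have h3 := hF' a ha
      have h4 : 0 < deriv F a ^ 2 := by positivity
      exact div_pos (mul_pos this.1 h2) h4
    linarith
  have hsl : (a - b) ^ 2 ≤ 4 * β * (G a - G b) ^ 2 := by
    have key : ∀ a b, a ∈ Set.Icc (-α) α → b ∈ Set.Icc (-α) α → a < b →
        (a - b) ^ 2 ≤ 4 * β * (G a - G b) ^ 2 := by
      intro a b ha hb hab
      obtain ⟨x, hx, hxe⟩ := exists_hasDerivAt_eq_slope G _ hab
        (fun x _ => (hder x).continuousAt.continuousWithinAt) (fun x _ => hder x)
      have hxm : x ∈ Set.Icc (-α) α := ⟨ha.1.trans hx.1.le, hx.2.le.trans hb.2⟩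
      have h1 := hβ x hxm
      have hd : 0 < deriv F x ^ 2 := by have := hF' x hxm; positivity
      rw [div_le_iff₀ hd] at h1
      obtain ⟨hf0, hf1⟩ := h01 x
      have hf2 : 0 < 1 - F x := by linarith
      rw [Real.sq_sqrt hf0.le] at hxe
      have h2 : (G b - G a) ^ 2 / (b - a) ^ 2 = deriv F x ^ 2 / (4 * (F x * (1 - F x))) := by
        rw [← div_pow, ← hxe, mul_pow, div_pow, div_pow, mul_pow, Real.sq_sqrt hf0.le,
          Real.sq_sqrt hf2.le]
        field_simp; norm_num
      have hba : 0 < (b - a) ^ 2 := by have : 0 < b - a := by linarith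
                                       positivity
      rw [div_eq_div_iff hba.ne' (by positivity)] at h2
      have h3 : 0 < F x * (1 - F x) := by positivity
      have h4 : (b - a) ^ 2 * (F x * (1 - F x)) ≤ (4 * β * (G b - G a) ^ 2) * (F x * (1 - F x)) := by
        have := mul_le_mul_of_nonneg_left h1 hba.le
        nlinarith
      have := le_of_mul_le_mul_right h4 h3
      nlinarith
    rcases lt_trichotomy a b with h | h | h
    · exact key a b ha hb h
    · subst h; simp
    · have := key b a hb ha h
      nlinarith
  have hGr : ∀ x, 0 ≤ G x ∧ G x ≤ Real.pi / 2 := fun x =>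
    ⟨Real.arcsin_nonneg.mpr (hs0 x).le, Real.arcsin_le_pi_div_two _⟩
  have hcos : Real.cos (G a - G b) = Real.sqrt (1 - F a) * Real.sqrt (1 - F b)
      + Real.sqrt (F a) * Real.sqrt (F b) := by
    rw [Real.cos_sub, hG]
    simp only
    rw [Real.cos_arcsin, Real.cos_arcsin, Real.sin_arcsin (by linarith [hs0 a]) (hs1 a).le,
      Real.sin_arcsin (by linarith [hs0 b]) (hs1 b).le, Real.sq_sqrt (h01 a).1.le,
      Real.sq_sqrt (h01 b).1.le]
  have hq : Real.cos (G a - G b) ≤ 1 - 2 / Real.pi ^ 2 * (G a - G b) ^ 2 := by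
    apply Real.cos_le_one_sub_mul_cos_sq
    rw [abs_le]
    constructor <;> linarith [(hGr a).1, (hGr a).2, (hGr b).1, (hGr b).2, Real.pi_pos]
  have k1 := kl_hellinger (F a) (F b) (h01 a).1 (h01 b).1
  have k2 := kl_hellinger (1 - F a) (1 - F b) (by linarith [(h01 a).2]) (by linarith [(h01 b).2])
  set KL := F a * Real.log (F a / F b) + (1 - F a) * Real.log ((1 - F a) / (1 - F b)) with hKL
  have k3 : 4 / Real.pi ^ 2 * (G a - G b) ^ 2 ≤ KL := by
    have : 4 / Real.pi ^ 2 * (G a - G b) ^ 2 = 2 * (2 / Real.pi ^ 2 * (G a - G b) ^ 2) := by ring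
    linarith
  have hpi : Real.pi ^ 2 ≤ 10 := by
    have := Real.pi_lt_d2
    have := Real.pi_pos
    nlinarith
  have k4 : 4 * (G a - G b) ^ 2 ≤ 10 * KL := by
    have hp2 : 0 < Real.pi ^ 2 := by have := Real.pi_pos; positivity
    have hK0 : 0 ≤ KL := le_trans (by positivity) k3
    rw [div_mul_eq_mul_div, div_le_iff₀ hp2] at k3
    nlinarith
  nlinarith

lemma lip_log (F : ℝ → ℝ) (hF : Differentiable ℝ F) (h01 : ∀ x, 0 < F x ∧ F x < 1) (α L : ℝ)
    (hL : ∀ x ∈ Set.Icc (-α) α, |deriv F x| / (F x * (1 - F x)) ≤ L) (y : Bool)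
    (a b : ℝ) (ha : a ∈ Set.Icc (-α) α) (hb : b ∈ Set.Icc (-α) α) :
    |(if y then Real.log (1 / F a) else Real.log (1 / (1 - F a)))
      - (if y then Real.log (1 / F b) else Real.log (1 / (1 - F b)))| ≤ L * |a - b| := by
  have hb1 : ∀ x ∈ Set.Icc (-α) α, |deriv F x| / F x ≤ L ∧ |deriv F x| / (1 - F x) ≤ L := by
    intro x hx
    have h := hL x hx
    obtain ⟨h0, h1⟩ := h01 x
    have h2 : 0 < 1 - F x := by linarith
    constructor
    · refine le_trans ?_ h
      gcongr
      nlinarith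
    · refine le_trans ?_ h
      gcongr
      nlinarith
  cases y
  · simp only [Bool.false_eq_true, if_false, one_div, Real.log_inv]
    have := (convex_Icc (-α) α).norm_image_sub_le_of_norm_hasDerivWithin_le
      (f := fun x => Real.log (1 - F x)) (f' := fun x => (- deriv F x) / (1 - F x)) (C := L)
      (fun x _ => (((hF x).hasDerivAt.const_sub 1).log (by linarith [(h01 x).2])).hasDerivWithinAt)
      (fun x hx => by
        rw [Real.norm_eq_abs, abs_div, abs_neg, abs_of_pos (show 0 < 1 - F x by linarith [(h01 x).2])]
        exact (hb1 x hx).2) ha hb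
    simp only [Real.norm_eq_abs] at this
    rw [abs_sub_comm b a] at this
    convert this using 2; ring
  · simp only [if_true, one_div, Real.log_inv]
    have := (convex_Icc (-α) α).norm_image_sub_le_of_norm_hasDerivWithin_le
      (f := fun x => Real.log (F x)) (f' := fun x => deriv F x / F x) (C := L)
      (fun x _ => ((hF x).hasDerivAt.log (h01 x).1.ne').hasDerivWithinAt)
      (fun x hx => by
        rw [Real.norm_eq_abs, abs_div, abs_of_pos (h01 x).1]
        exact (hb1 x hx).1) ha hb
    simp only [Real.norm_eq_abs] at this
    rw [abs_sub_comm b a] at this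
    convert this using 2; ring

/-! ### Assembly -/

noncomputable def phi (F : ℝ → ℝ) (y : Bool) (x : ℝ) : ℝ :=
  if y then Real.log (1 / F x) else Real.log (1 / (1 - F x))

lemma phi_bound (F : ℝ → ℝ) (h01 : ∀ x, 0 < F x ∧ F x < 1) (y : Bool) (x U : ℝ)
    (hU : Real.log (1 / (F x * (1 - F x))) ≤ U) : 0 ≤ phi F y x ∧ phi F y x ≤ U := by
  obtain ⟨h0, h1⟩ := h01 x
  have h2 : 0 < 1 - F x := by linarith
  have l1 := Real.log_neg h0 h1
  have l2 := Real.log_neg h2 (by linarith)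
  rw [one_div, Real.log_inv, Real.log_mul h0.ne' h2.ne'] at hU
  cases y <;> simp only [phi, Bool.false_eq_true, if_false, if_true, one_div, Real.log_inv] <;>
    constructor <;> linarith

lemma mx_const_mul {T : Type} [Fintype T] [Nonempty T] (c : ℝ) (hc : 0 ≤ c) (f : T → ℝ) :
    mx (fun τ => c * f τ) ≤ c * mx f :=
  mx_le fun τ => mul_le_mul_of_nonneg_left (le_mx f τ) hc

set_option maxHeartbeats 2000000 in
/-- Expected supremum of the empirical process. -/
lemma expected_sup {d1 d2 n : ℕ} [Nonempty (Fin d1 ⊕ Fin d2)] {T : Type} [Fintype T] [Nonempty T]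
    (w : (Fin d1 × Fin d2) × Bool → ℝ) (hw : ∀ a, 0 ≤ w a) (hw1 : ∑ a, w a = 1)
    (f : T → (Fin d1 × Fin d2) × Bool → ℝ)
    (a : Fin d1 → Fin d2 → ℝ) (M N : T → Matrix (Fin d1) (Fin d2) ℝ)
    (hMN : ∀ τ i j, M τ i j = a i j * N τ i j) (B : ℝ) (hB : ∀ τ, traceNorm (N τ) ≤ B)
    (hB0 : 0 ≤ B) (p : ℕ) (hp : 1 ≤ p) (hd : ((d1 + d2 : ℕ) : ℝ) ≤ Real.exp p)
    (L : ℝ) (hL0 : 0 ≤ L)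
    (hL : ∀ τ τ' s, |f τ s - f τ' s| ≤ L * |M τ s.1.1 s.1.2 - M τ' s.1.1 s.1.2|)
    (V : ℝ) (hV : ∑ x : Fin n → (Fin d1 × Fin d2) × Bool, (∏ t, w (x t)) *
      mx (fun k => ∑ t, dvar a (x t).1 k) ≤ V) :
    ∑ x : Fin n → (Fin d1 × Fin d2) × Bool, (∏ t, w (x t)) *
        mx (fun τ => ∑ t, ((∑ s, w s * f τ s) - f τ (x t)))
      ≤ 2 * L * B * Real.sqrt (2 * Real.exp 1 * p * V) := by
  have hW0 : ∀ x : Fin n → (Fin d1 × Fin d2) × Bool, 0 ≤ ∏ t, w (x t) :=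
    fun x => Finset.prod_nonneg fun t _ => hw _
  set v : (Fin n → (Fin d1 × Fin d2) × Bool) → ℝ :=
    fun x => mx (fun k => ∑ t, dvar a (x t).1 k) with hv
  have hv0 : ∀ x, 0 ≤ v x := fun x => by
    obtain ⟨k, hk⟩ := exists_mx (fun k => ∑ t, dvar a (x t).1 k)
    rw [hv]; simp only
    rw [hk]
    exact Finset.sum_nonneg fun t _ => dvar_nonneg _ _ _
  have hsym := symmetrization w hw hw1 f n (fun _ => 0)
  simp only [zero_add] at hsym
  have h1 : ∀ x : Fin n → (Fin d1 × Fin d2) × Bool,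
      ∑ e : Fin n → Bool, mx (fun τ => 2 * ∑ t, sgn' (e t) * f τ (x t))
        ≤ 2 ^ n * (2 * L * B * Real.sqrt (2 * Real.exp 1 * p * v x)) := by
    intro x
    have hc := contraction (2 * L) n (fun t τ => M τ (x t).1.1 (x t).1.2)
      (fun t τ => 2 * f τ (x t)) (fun t τ τ' => by
        rw [← mul_sub, abs_mul, abs_two, mul_assoc]
        exact mul_le_mul_of_nonneg_left (hL τ τ' (x t)) (by norm_num)) (fun _ => 0)
    simp only [zero_add] at hc
    have hb := cond_bound a (fun t => (x t).1) M N hMN B hB hB0 p hp hd (v x) (hv0 x)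
      (fun k => le_mx (fun k => ∑ t, dvar a (x t).1 k) k)
    calc ∑ e : Fin n → Bool, mx (fun τ => 2 * ∑ t, sgn' (e t) * f τ (x t))
        = ∑ e : Fin n → Bool, mx (fun τ => ∑ t, sgn' (e t) * (2 * f τ (x t))) := by
          refine Finset.sum_congr rfl fun e _ => ?_
          congr 1; funext τ; rw [Finset.mul_sum]
          exact Finset.sum_congr rfl fun t _ => by ring
      _ ≤ _ := hc
      _ ≤ ∑ e : Fin n → Bool, (2 * L) * mx (fun τ => ∑ t, sgn' (e t) * M τ (x t).1.1 (x t).1.2) :=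
          Finset.sum_le_sum fun e _ => mx_const_mul _ (by positivity) _
      _ = (2 * L) * ∑ e : Fin n → Bool, mx (fun τ => ∑ t, sgn' (e t) * M τ (x t).1.1 (x t).1.2) := by
          rw [Finset.mul_sum]
      _ ≤ (2 * L) * (2 ^ n * (B * Real.sqrt (2 * Real.exp 1 * p * v x))) :=
          mul_le_mul_of_nonneg_left hb (by positivity)
      _ = _ := by ring
  have h2n : (0:ℝ) < 2 ^ n := by positivity
  have h2 : (2:ℝ) ^ n * ∑ x : Fin n → (Fin d1 × Fin d2) × Bool, (∏ t, w (x t)) *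
        mx (fun τ => ∑ t, ((∑ s, w s * f τ s) - f τ (x t)))
      ≤ 2 ^ n * (2 * L * B * ∑ x, (∏ t, w (x t)) * Real.sqrt (2 * Real.exp 1 * p * v x)) := by
    refine hsym.trans ?_
    refine (Finset.sum_le_sum fun x _ => mul_le_mul_of_nonneg_left (h1 x) (hW0 x)).trans ?_
    rw [Finset.mul_sum, Finset.mul_sum]
    exact le_of_eq (Finset.sum_congr rfl fun x _ => by ring)
  refine (le_of_mul_le_mul_left h2 h2n).trans ?_
  refine mul_le_mul_of_nonneg_left ?_ (by positivity)
  apply Real.le_sqrt_of_sq_le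
  refine (Real.pow_arith_mean_le_arith_mean_pow Finset.univ (fun x => ∏ t, w (x t)) _
    (fun x _ => hW0 x) (sum_prod_one n w hw1) (fun x _ => Real.sqrt_nonneg _) 2).trans ?_
  have : ∀ x, Real.sqrt (2 * Real.exp 1 * p * v x) ^ 2 = 2 * Real.exp 1 * p * v x := fun x =>
    Real.sq_sqrt (mul_nonneg (by positivity) (hv0 x))
  simp only [this]
  calc ∑ x, (∏ t, w (x t)) * (2 * Real.exp 1 * p * v x)
      = 2 * Real.exp 1 * p * ∑ x, (∏ t, w (x t)) * v x := by
        rw [Finset.mul_sum]; exact Finset.sum_congr rfl fun x _ => by ring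
    _ ≤ _ := mul_le_mul_of_nonneg_left hV (by positivity)

lemma sum_omega {d1 d2 : ℕ} (f : (Fin d1 × Fin d2) × Bool → ℝ) :
    ∑ s, f s = ∑ i, ∑ j, (f ((i, j), true) + f ((i, j), false)) := by
  simp only [Fintype.sum_prod_type, Fintype.sum_bool]

lemma linf_le {d1 d2 : ℕ} (M : Matrix (Fin d1) (Fin d2) ℝ) (α : ℝ) (h : linfNorm M ≤ α)
    (k : Fin d1) (l : Fin d2) : M k l ∈ Set.Icc (-α) α := by
  have h1 : |M k l| ≤ ⨆ l, |M k l| := le_ciSup (f := fun l => |M k l|) (Set.finite_range _).bddAbove l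
  have h2 : (⨆ l, |M k l|) ≤ linfNorm M :=
    le_ciSup (f := fun k => ⨆ l, |M k l|) (Set.finite_range _).bddAbove k
  have := abs_le.mp ((h1.trans h2).trans h)
  exact this

/-- The variance bound. -/
lemma variance_bound {d1 d2 n : ℕ} [Nonempty (Fin d1 ⊕ Fin d2)] (hd1 : 1 ≤ d1) (hd2 : 1 ≤ d2)
    (μ : ℝ) (hμ : 1 ≤ μ) (π : Fin d1 → Fin d2 → ℝ) (hπ : ∀ k l, 1 / (μ * d1 * d2) ≤ π k l)
    (hn : μ * (min d1 d2 : ℝ) * Real.log (d1 + d2 : ℝ) ≤ n)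
    (w : (Fin d1 × Fin d2) × Bool → ℝ) (hw : ∀ a, 0 ≤ w a) (hw1 : ∑ a, w a = 1)
    (hwπ : ∀ i j, w ((i, j), true) + w ((i, j), false) = π i j)
    (a : Fin d1 → Fin d2 → ℝ)
    (ha : ∀ i j, a i j ^ 2 = 1 / ((∑ l, π i l) * (∑ k, π k j))) :
    ∑ x : Fin n → (Fin d1 × Fin d2) × Bool, (∏ t, w (x t)) *
      mx (fun k => ∑ t, dvar a (x t).1 k) ≤ 3 * n * μ * (d1 + d2) := by
  have hd1' : (1:ℝ) ≤ d1 := by exact_mod_cast hd1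
  have hd2' : (1:ℝ) ≤ d2 := by exact_mod_cast hd2
  have hπ0 : ∀ i j, 0 < π i j := fun i j => lt_of_lt_of_le (by positivity) (hπ i j)
  have hr : ∀ i, 1 / (μ * d1) ≤ ∑ l, π i l := by
    intro i
    calc 1 / (μ * d1) = ∑ _l : Fin d2, 1 / (μ * d1 * d2) := by
          rw [Finset.sum_const, Finset.card_univ, Fintype.card_fin, nsmul_eq_mul]; field_simp
      _ ≤ _ := Finset.sum_le_sum fun l _ => hπ i l
  have hc : ∀ j, 1 / (μ * d2) ≤ ∑ k, π k j := by
    intro j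
    calc 1 / (μ * d2) = ∑ _k : Fin d1, 1 / (μ * d1 * d2) := by
          rw [Finset.sum_const, Finset.card_univ, Fintype.card_fin, nsmul_eq_mul]; field_simp
      _ ≤ _ := Finset.sum_le_sum fun k _ => hπ k j
  have hr0 : ∀ i, 0 < ∑ l, π i l := fun i => lt_of_lt_of_le (by positivity) (hr i)
  have hc0 : ∀ j, 0 < ∑ k, π k j := fun j => lt_of_lt_of_le (by positivity) (hc j)
  have hri : ∀ i, 1 / (∑ l, π i l) ≤ μ * d1 := fun i => by
    rw [div_le_iff₀ (hr0 i)]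
    have := hr i
    rw [div_le_iff₀ (by positivity)] at this
    linarith
  have hci : ∀ j, 1 / (∑ k, π k j) ≤ μ * d2 := fun j => by
    rw [div_le_iff₀ (hc0 j)]
    have := hc j
    rw [div_le_iff₀ (by positivity)] at this
    linarith
  have ha' : ∀ i j, a i j ^ 2 = (1 / (∑ l, π i l)) * (1 / ∑ k, π k j) := fun i j => by
    rw [ha, one_div_mul_one_div]
  have hamax : ∀ i j, a i j ^ 2 ≤ μ ^ 2 * d1 * d2 := by
    intro i j
    rw [ha']
    calc (1 / (∑ l, π i l)) * (1 / ∑ k, π k j) ≤ (μ * d1) * (μ * d2) :=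
          mul_le_mul (hri i) (hci j) (by have := hc0 j; positivity) (by positivity)
      _ = _ := by ring
  have hθ : (0:ℝ) < 1 / (μ ^ 2 * d1 * d2) := by positivity
  have key := expected_max w hw hw1 (fun k s => dvar a s.1 k) (fun k s => dvar_nonneg _ _ _)
    (1 / (μ ^ 2 * d1 * d2)) hθ (fun k s => by
      rw [one_div_mul_eq_div, div_le_one (by positivity)]
      rcases k with i | j <;> simp only [dvar, Sum.elim_inl, Sum.elim_inr] <;> split_ifs
      · exact hamax _ _
      · positivity
      · exact hamax _ _
      · positivity) (μ * (d1 + d2)) (fun k => by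
      rw [sum_omega]
      simp only [← add_mul, hwπ]
      rcases k with i | j
      · simp only [dvar, Sum.elim_inl]
        rw [Finset.sum_eq_single i (fun b _ hb => by simp [hb]) (by simp)]
        simp only [if_true]
        calc ∑ l, π i l * a i l ^ 2 ≤ ∑ l, π i l * ((1 / (∑ l, π i l)) * (μ * d2)) := by
              refine Finset.sum_le_sum fun l _ => mul_le_mul_of_nonneg_left ?_ (hπ0 i l).le
              rw [ha']
              exact mul_le_mul_of_nonneg_left (hci l) (by have := hr0 i; positivity)
          _ = μ * d2 := by
              rw [← Finset.sum_mul]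
              have := (hr0 i).ne'
              field_simp
          _ ≤ _ := by nlinarith
      · simp only [dvar, Sum.elim_inr]
        rw [Finset.sum_comm, Finset.sum_eq_single j (fun b _ hb => by simp [hb]) (by simp)]
        simp only [if_true]
        calc ∑ k, π k j * a k j ^ 2 ≤ ∑ k, π k j * ((1 / (∑ k, π k j)) * (μ * d1)) := by
              refine Finset.sum_le_sum fun k _ => mul_le_mul_of_nonneg_left ?_ (hπ0 k j).le
              rw [ha', mul_comm]
              exact mul_le_mul_of_nonneg_left (hri k) (by have := hc0 j; positivity)
          _ = μ * d1 := by
              rw [← Finset.sum_mul]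
              have := (hc0 j).ne'
              field_simp
          _ ≤ _ := by nlinarith) n
  refine key.trans ?_
  have hcard : ((Fintype.card (Fin d1 ⊕ Fin d2) : ℕ) : ℝ) = d1 + d2 := by simp
  rw [hcard, div_div_eq_mul_div, div_one]
  have hlog : 0 ≤ Real.log (d1 + d2 : ℝ) := Real.log_nonneg (by linarith)
  have hmm : (d1:ℝ) * d2 ≤ (d1 + d2) * min (d1:ℝ) d2 := by
    rcases le_total (d1:ℝ) d2 with h | h
    · rw [min_eq_left h]; nlinarith
    · rw [min_eq_right h]; nlinarith
  have : Real.log (d1 + d2 : ℝ) * (μ ^ 2 * d1 * d2) ≤ n * μ * (d1 + d2) := by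
    calc Real.log (d1 + d2 : ℝ) * (μ ^ 2 * d1 * d2) = (Real.log (d1 + d2 : ℝ) * μ ^ 2) * (d1 * d2) := by ring
      _ ≤ (Real.log (d1 + d2 : ℝ) * μ ^ 2) * ((d1 + d2) * min (d1:ℝ) d2) := by gcongr
      _ = (μ * (min d1 d2 : ℝ) * Real.log (d1 + d2 : ℝ)) * (μ * (d1 + d2)) := by ring
      _ ≤ n * (μ * (d1 + d2)) := by gcongr
      _ = _ := by ring
  linarith

/-- The final numerical computation. -/
lemma final_arith (n : ℝ) (hn : 0 < n) (d : ℝ) (hd : 0 ≤ d) (l : ℝ) (hl : 0 ≤ l) (p : ℕ)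
    (hp : (p : ℝ) ≤ 2.5 * l) (r : ℕ) (μ : ℝ) (hμ : 0 ≤ μ) (α : ℝ) (hα : 0 ≤ α) (L : ℝ) (hL : 0 ≤ L)
    (β : ℝ) (hβ : 0 ≤ β) (U : ℝ) (hU : 0 ≤ U) (δ : ℝ) (hδ : 0 < δ) (hδ1 : δ ≤ 1)
    (err K Zx EZ : ℝ) (h1 : err ≤ 10 * β * K) (h2 : n * K ≤ Zx)
    (h3 : Zx ≤ EZ + 2 * U * Real.sqrt (2 * n * Real.log (1 / δ)))
    (h4 : EZ ≤ 2 * L * (α * Real.sqrt r) * Real.sqrt (2 * Real.exp 1 * p * (3 * n * μ * d))) :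
    err ≤ 1000 * β * (L * α * Real.sqrt (μ * r * d * l / n) +
        U * Real.sqrt (Real.log (4 / δ) / n)) := by
  have e : Real.exp 1 ≤ 2.8 := by have := Real.exp_one_lt_d9; linarith
  have hsq : ∀ X : ℝ, Real.sqrt (n ^ 2 * (X / n)) = n * Real.sqrt (X / n) := fun X => by
    rw [Real.sqrt_mul (by positivity), Real.sqrt_sq hn.le]
  have hA : Real.sqrt r * Real.sqrt (2 * Real.exp 1 * p * (3 * n * μ * d)) ≤
      10 * (n * Real.sqrt (μ * r * d * l / n)) := by
    rw [← Real.sqrt_mul (by positivity), ← hsq]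
    have h10 : (10:ℝ) = Real.sqrt (10 ^ 2) := by rw [Real.sqrt_sq]; norm_num
    rw [h10, ← Real.sqrt_mul (by positivity)]
    apply Real.sqrt_le_sqrt
    calc (r:ℝ) * (2 * Real.exp 1 * p * (3 * n * μ * d))
        ≤ (r:ℝ) * (2 * 2.8 * (2.5 * l) * (3 * n * μ * d)) := by gcongr
      _ = 42 * (n * (μ * r * d * l)) := by ring
      _ ≤ 100 * (n * (μ * r * d * l)) := by gcongr; norm_num
      _ = _ := by field_simp; ring
  have hlog0 : 0 ≤ Real.log (1 / δ) := Real.log_nonneg (by rw [le_div_iff₀ hδ]; linarith)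
  have hB : Real.sqrt (2 * n * Real.log (1 / δ)) ≤ 2 * (n * Real.sqrt (Real.log (4 / δ) / n)) := by
    rw [← hsq]
    have h10 : (2:ℝ) = Real.sqrt (2 ^ 2) := by rw [Real.sqrt_sq]; norm_num
    have hll : Real.log (1 / δ) ≤ Real.log (4 / δ) :=
      Real.log_le_log (by positivity) (by gcongr; norm_num)
    nth_rewrite 2 [h10]
    rw [← Real.sqrt_mul (by positivity)]
    apply Real.sqrt_le_sqrt
    calc 2 * n * Real.log (1 / δ) ≤ 4 * n * Real.log (4 / δ) := by gcongr; norm_num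
      _ = _ := by field_simp; ring
  set A := Real.sqrt (μ * r * d * l / n)
  set B := Real.sqrt (Real.log (4 / δ) / n)
  have hA0 : 0 ≤ A := Real.sqrt_nonneg _
  have hB0 : 0 ≤ B := Real.sqrt_nonneg _
  have hE : EZ ≤ n * (20 * (L * α * A)) := by
    refine h4.trans ?_
    calc 2 * L * (α * Real.sqrt r) * Real.sqrt (2 * Real.exp 1 * p * (3 * n * μ * d))
        = (2 * L * α) * (Real.sqrt r * Real.sqrt (2 * Real.exp 1 * p * (3 * n * μ * d))) := by ring
      _ ≤ (2 * L * α) * (10 * (n * A)) := by gcongr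
      _ = _ := by ring
  have hUB : 2 * U * Real.sqrt (2 * n * Real.log (1 / δ)) ≤ n * (4 * (U * B)) := by
    calc _ ≤ 2 * U * (2 * (n * B)) := by gcongr
      _ = _ := by ring
  have hK : K ≤ 20 * (L * α * A) + 4 * (U * B) := by
    refine le_of_mul_le_mul_left ?_ hn
    linarith
  have hX : 0 ≤ L * α * A := by positivity
  have hY : 0 ≤ U * B := by positivity
  calc err ≤ 10 * β * K := h1
    _ ≤ 10 * β * (100 * (L * α * A + U * B)) := by gcongr; linarith
    _ = _ := by ring

/-- upper bound for the weighted trace-norm constrained maximum likelihood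
estimator of 1-bit matrix completion under a general sampling distribution with
`π_{kl} ≥ 1/(μ d1 d2)`: there is an absolute constant `C > 0` such that, for
`n ≥ μ min(d1,d2) log d`, any minimizer `M̂` of the negative log-likelihood over
`K_{Π,*}(r, α)` satisfies, with probability at least `1 − δ`,
`‖M̂ − M*‖_Π² ≤ C β_α { L_α α √(μ r d log(d)/n) + U_α √(log(4/δ)/n) }`, `d = d1 + d2`. -/
theorem weightedTraceNorm_MLE_upper_bound :
    ∃ C : ℝ, 0 < C ∧
      ∀ (d1 d2 n r : ℕ) (α μ : ℝ) (F : ℝ → ℝ) (π : Fin d1 → Fin d2 → ℝ)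
        (Mstar : Matrix (Fin d1) (Fin d2) ℝ) (Lα βα Uα δ : ℝ)
        (Mhat : (Fin n → Fin d1 × Fin d2) → (Fin n → Bool) →
          Matrix (Fin d1) (Fin d2) ℝ),
        1 ≤ d1 → 1 ≤ d2 → 1 ≤ r → 0 < α →
        Differentiable ℝ F → (∀ x, 0 < F x ∧ F x < 1) →
        (∀ x ∈ Set.Icc (-α) α, deriv F x ≠ 0) →
        IsLUB ((fun x => |deriv F x| / (F x * (1 - F x))) '' Set.Icc (-α) α) Lα →
        IsLUB ((fun x => F x * (1 - F x) / (deriv F x) ^ 2) '' Set.Icc (-α) α) βα →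
        IsLUB ((fun x => Real.log (1 / (F x * (1 - F x)))) '' Set.Icc (-α) α) Uα →
        (∀ k l, 0 ≤ π k l) → (∑ k, ∑ l, π k l = 1) →
        1 ≤ μ → (∀ k l, 1 / (μ * d1 * d2) ≤ π k l) →
        weightedTraceNorm π Mstar ≤ α * Real.sqrt r → linfNorm Mstar ≤ α →
        μ * (min d1 d2 : ℝ) * Real.log (d1 + d2 : ℝ) ≤ n →
        0 < δ →
        (∀ (S : Fin n → Fin d1 × Fin d2) (y : Fin n → Bool),
          (weightedTraceNorm π (Mhat S y) ≤ α * Real.sqrt r ∧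
            linfNorm (Mhat S y) ≤ α) ∧
          ∀ M : Matrix (Fin d1) (Fin d2) ℝ,
            weightedTraceNorm π M ≤ α * Real.sqrt r → linfNorm M ≤ α →
            negLogLik F S y (Mhat S y) ≤ negLogLik F S y M) →
        1 - δ ≤
          ∑ S : Fin n → Fin d1 × Fin d2, ∑ y : Fin n → Bool,
            Set.indicator
              { p : (Fin n → Fin d1 × Fin d2) × (Fin n → Bool) |
                ∑ k, ∑ l, π k l * (Mhat p.1 p.2 k l - Mstar k l) ^ 2 ≤
                  C * βα *
                    (Lα * α *
                      Real.sqrt (μ * r * (d1 + d2 : ℝ) * Real.log (d1 + d2 : ℝ) / n) +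
                    Uα * Real.sqrt (Real.log (4 / δ) / n)) }
              (fun p => sampleWeight F π Mstar p.1 p.2) (S, y) := by
  refine ⟨1000, by norm_num, ?_⟩
  intro d1 d2 n r α μ F π Mstar L β U δ Mhat hd1 hd2 hr hα hF h01 hF' hL hβ hU hπ0 hπ1 hμ hπ
    hMw hMi hn hδ hhat
  have hsw : ∀ (S : Fin n → Fin d1 × Fin d2) (y : Fin n → Bool), 0 ≤ sampleWeight F π Mstar S y := by
    intro S y
    refine Finset.prod_nonneg fun t _ => mul_nonneg (hπ0 _ _) ?_
    obtain ⟨h0, h1⟩ := h01 (Mstar (S t).1 (S t).2)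
    split_ifs <;> linarith
  rcases le_or_gt 1 δ with hδ1 | hδ1
  · refine (sub_nonpos.mpr hδ1).trans ?_
    exact Finset.sum_nonneg fun S _ => Finset.sum_nonneg fun y _ =>
      Set.indicator_nonneg (fun p _ => hsw p.1 p.2) _
  haveI : Nonempty (Fin d1) := ⟨⟨0, hd1⟩⟩
  haveI : Nonempty (Fin d2) := ⟨⟨0, hd2⟩⟩
  have hd1' : (1:ℝ) ≤ d1 := by exact_mod_cast hd1
  have hd2' : (1:ℝ) ≤ d2 := by exact_mod_cast hd2
  have hlog2 : Real.log 2 ≤ Real.log (d1 + d2 : ℝ) := Real.log_le_log (by norm_num) (by linarith)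
  have hlg : (0.6931:ℝ) < Real.log (d1 + d2 : ℝ) := by
    have := Real.log_two_gt_d9
    linarith
  have hn0 : 0 < n := by
    have h1 : (0:ℝ) < μ * (min d1 d2 : ℝ) * Real.log (d1 + d2 : ℝ) := by
      have : (0:ℝ) < min (d1:ℝ) d2 := lt_min (by linarith) (by linarith)
      have h2 : (0:ℝ) < Real.log (d1 + d2 : ℝ) := by linarith
      positivity
    exact_mod_cast h1.trans_le hn
  have hn0' : (0:ℝ) < n := by exact_mod_cast hn0
  have hz : (0:ℝ) ∈ Set.Icc (-α) α := ⟨by linarith, hα.le⟩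
  have hLp : ∀ x ∈ Set.Icc (-α) α, |deriv F x| / (F x * (1 - F x)) ≤ L := fun x hx =>
    hL.1 ⟨x, hx, rfl⟩
  have hβp : ∀ x ∈ Set.Icc (-α) α, F x * (1 - F x) / (deriv F x) ^ 2 ≤ β := fun x hx =>
    hβ.1 ⟨x, hx, rfl⟩
  have hUp : ∀ x ∈ Set.Icc (-α) α, Real.log (1 / (F x * (1 - F x))) ≤ U := fun x hx =>
    hU.1 ⟨x, hx, rfl⟩
  obtain ⟨hz0, hz1⟩ := h01 0
  have hz2 : 0 < 1 - F 0 := by linarith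
  have hL0 : 0 ≤ L := le_trans (by positivity) (hLp 0 hz)
  have hβ0 : 0 ≤ β := le_trans (by positivity) (hβp 0 hz)
  have hU0 : 0 < U := by
    refine lt_of_lt_of_le (Real.log_pos ?_) (hUp 0 hz)
    rw [lt_div_iff₀ (by positivity)]
    nlinarith
  have hMs : ∀ k l, Mstar k l ∈ Set.Icc (-α) α := linf_le Mstar α hMi
  have hMh : ∀ S y k l, Mhat S y k l ∈ Set.Icc (-α) α := fun S y => linf_le _ α (hhat S y).1.2
  have hπpos : ∀ i j, 0 < π i j := fun i j => lt_of_lt_of_le (by positivity) (hπ i j)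
  -- the single-observation distribution
  let w : (Fin d1 × Fin d2) × Bool → ℝ := fun s =>
    π s.1.1 s.1.2 * (if s.2 then F (Mstar s.1.1 s.1.2) else 1 - F (Mstar s.1.1 s.1.2))
  have hw : ∀ s, 0 ≤ w s := by
    intro s
    refine mul_nonneg (hπ0 _ _) ?_
    obtain ⟨h0, h1⟩ := h01 (Mstar s.1.1 s.1.2)
    split_ifs <;> linarith
  have hwπ : ∀ i j, w ((i, j), true) + w ((i, j), false) = π i j := by
    intro i j
    simp only [w, if_true, Bool.false_eq_true, if_false]
    ring
  have hw1 : ∑ s, w s = 1 := by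
    rw [sum_omega]
    simp only [hwπ]
    exact hπ1
  let f : ((Fin n → Fin d1 × Fin d2) × (Fin n → Bool)) → (Fin d1 × Fin d2) × Bool → ℝ :=
    fun τ s => phi F s.2 (Mhat τ.1 τ.2 s.1.1 s.1.2) - phi F s.2 (Mstar s.1.1 s.1.2)
  have hfU : ∀ τ s, |f τ s| ≤ U := by
    intro τ s
    have h1 := phi_bound F h01 s.2 _ U (hUp _ (hMh τ.1 τ.2 s.1.1 s.1.2))
    have h2 := phi_bound F h01 s.2 _ U (hUp _ (hMs s.1.1 s.1.2))
    rw [abs_le]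
    constructor <;> simp only [f] <;> linarith
  let Z : (Fin n → (Fin d1 × Fin d2) × Bool) → ℝ := fun x =>
    mx (fun τ => ∑ t, ((∑ s, w s * f τ s) - f τ (x t)))
  have hZ1 : ∀ x t a, Z x ≤ Z (Function.update x t a) + 2 * U := by
    intro x t a
    refine mx_le fun τ => ?_
    refine le_trans ?_ (add_le_add_left
      (le_mx (fun τ => ∑ t', ((∑ s, w s * f τ s) - f τ (Function.update x t a t'))) τ) _)
    have : ∑ t', ((∑ s, w s * f τ s) - f τ (x t'))
        - ∑ t', ((∑ s, w s * f τ s) - f τ (Function.update x t a t')) = f τ a - f τ (x t) := by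
      rw [← Finset.sum_sub_distrib, Finset.sum_eq_single t]
      · simp
      · intro b _ hb
        simp [Function.update_of_ne hb]
      · simp
    have h1 := abs_le.mp (hfU τ a)
    have h2 := abs_le.mp (hfU τ (x t))
    linarith
  have hZ : ∀ x t a, |Z x - Z (Function.update x t a)| ≤ 2 * U := by
    intro x t a
    rw [abs_le]
    have h1 := hZ1 x t a
    have h2 := hZ1 (Function.update x t a) t (x t)
    rw [Function.update_idem, Function.update_eq_self] at h2
    constructor <;> linarith
  -- expectation bound
  have hrow : ∀ i, 0 < ∑ l, π i l := fun i => Finset.sum_pos (fun l _ => hπpos i l) Finset.univ_nonempty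
  have hcol : ∀ j, 0 < ∑ k, π k j := fun j => Finset.sum_pos (fun k _ => hπpos k j) Finset.univ_nonempty
  let a : Fin d1 → Fin d2 → ℝ := fun i j => (Real.sqrt (∑ l, π i l) * Real.sqrt (∑ k, π k j))⁻¹
  have ha : ∀ i j, a i j ^ 2 = 1 / ((∑ l, π i l) * (∑ k, π k j)) := by
    intro i j
    simp only [a]
    rw [inv_pow, mul_pow, Real.sq_sqrt (hrow i).le, Real.sq_sqrt (hcol j).le, one_div]
  have hV := variance_bound (n := n) hd1 hd2 μ hμ π hπ hn w hw hw1 hwπ a ha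
  obtain ⟨p, hp1, hpd, hpl⟩ : ∃ p : ℕ, 1 ≤ p ∧ ((d1 + d2 : ℕ) : ℝ) ≤ Real.exp p ∧
      (p : ℝ) ≤ 2.5 * Real.log (d1 + d2 : ℝ) := by
    refine ⟨⌈Real.log (d1 + d2 : ℝ)⌉₊, ?_, ?_, ?_⟩
    · exact Nat.one_le_iff_ne_zero.mpr (Nat.ceil_pos.mpr (by linarith)).ne'
    · push_cast
      calc (d1 + d2 : ℝ) = Real.exp (Real.log (d1 + d2 : ℝ)) :=
            (Real.exp_log (by linarith)).symm
        _ ≤ _ := Real.exp_le_exp.mpr (Nat.le_ceil _)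
    · have := (Nat.ceil_lt_add_one (show 0 ≤ Real.log (d1 + d2 : ℝ) by linarith))
      linarith
  have hE := expected_sup (n := n) w hw hw1 f a (fun τ => Mhat τ.1 τ.2)
    (fun τ => Matrix.diagonal (fun k => Real.sqrt (∑ l, π k l)) * Mhat τ.1 τ.2 *
      Matrix.diagonal (fun l => Real.sqrt (∑ k, π k l)))
    (fun τ i j => by
      have h1 := (Real.sqrt_pos.mpr (hrow i)).ne'
      have h2 := (Real.sqrt_pos.mpr (hcol j)).ne'
      rw [Matrix.mul_diagonal, Matrix.diagonal_mul]
      simp only [a]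
      field_simp)
    (α * Real.sqrt r) (fun τ => (hhat τ.1 τ.2).1.1) (by positivity) p hp1 hpd L hL0
    (fun τ τ' s => by
      have := lip_log F hF h01 α L hLp s.2 _ _ (hMh τ.1 τ.2 s.1.1 s.1.2) (hMh τ'.1 τ'.2 s.1.1 s.1.2)
      simp only [f, sub_sub_sub_cancel_right]
      exact this)
    _ hV
  have hmain := mcdiarmid_tail w hw hw1 (2 * U) (by positivity) n hn0 Z hZ δ hδ hδ1.le
    {x | ∑ k, ∑ l, π k l * (Mhat (fun t => (x t).1) (fun t => (x t).2) k l - Mstar k l) ^ 2 ≤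
      1000 * β * (L * α * Real.sqrt (μ * r * (d1 + d2 : ℝ) * Real.log (d1 + d2 : ℝ) / n) +
        U * Real.sqrt (Real.log (4 / δ) / n))} (by
    intro x hx
    rw [Set.mem_setOf_eq]
    set S : Fin n → Fin d1 × Fin d2 := fun t => (x t).1 with hS
    set y : Fin n → Bool := fun t => (x t).2 with hy
    have hlik : ∑ t, f (S, y) (x t) ≤ 0 := by
      have h := (hhat S y).2 Mstar hMw hMi
      have h2 : ∑ t, f (S, y) (x t) = negLogLik F S y (Mhat S y) - negLogLik F S y Mstar := by
        rw [negLogLik, negLogLik, ← Finset.sum_sub_distrib]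
        rfl
      linarith
    have hZx : n * ∑ s, w s * f (S, y) s ≤ Z x := by
      have h := le_mx (fun τ => ∑ t, ((∑ s, w s * f τ s) - f τ (x t))) (S, y)
      simp only [Finset.sum_sub_distrib, Finset.sum_const, Finset.card_univ, Fintype.card_fin,
        nsmul_eq_mul] at h
      simp only [Z, Finset.sum_sub_distrib, Finset.sum_const, Finset.card_univ, Fintype.card_fin,
        nsmul_eq_mul]
      linarith
    have hkl : ∑ k, ∑ l, π k l * (Mhat S y k l - Mstar k l) ^ 2 ≤
        10 * β * ∑ s, w s * f (S, y) s := by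
      rw [sum_omega, Finset.mul_sum]
      refine Finset.sum_le_sum fun k _ => ?_
      rw [Finset.mul_sum]
      refine Finset.sum_le_sum fun l _ => ?_
      have h := kl_lower F hF h01 α β hF' hβp _ _ (hMs k l) (hMh S y k l)
      obtain ⟨u0, u1⟩ := h01 (Mstar k l)
      obtain ⟨v0, v1⟩ := h01 (Mhat S y k l)
      have u2 : 0 < 1 - F (Mstar k l) := by linarith
      have v2 : 0 < 1 - F (Mhat S y k l) := by linarith
      rw [Real.log_div u0.ne' v0.ne', Real.log_div u2.ne' v2.ne'] at h
      have h' := mul_le_mul_of_nonneg_left h (hπ0 k l)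
      simp only [w, f, phi, if_true, Bool.false_eq_true, if_false, one_div, Real.log_inv]
      calc π k l * (Mhat S y k l - Mstar k l) ^ 2 = π k l * (Mstar k l - Mhat S y k l) ^ 2 := by ring
        _ ≤ _ := h'
        _ = _ := by ring
    have hZE : ∑ z, (∏ t, w (z t)) * Z z ≤ _ := hE
    exact final_arith n hn0' (d1 + d2) (by linarith) (Real.log (d1 + d2 : ℝ)) (by linarith) p hpl
      r μ (by linarith) α hα.le L hL0 β hβ0 U hU0.le δ hδ hδ1.le _ _ _ _ hkl hZx hx hZE)
  refine hmain.trans (le_of_eq ?_)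
  rw [← Fintype.sum_prod_type']
  refine Fintype.sum_equiv (Equiv.arrowProdEquivProdArrow (Fin n) (fun _ => Fin d1 × Fin d2) (fun _ => Bool)) _ _ ?_
  intro x
  rfl
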